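/- Let G be a finite group and k a field of characteristic p > 0 dividing |G|. There exist a finitely generated kG-module V and a filtration 0 = M_0 ⊆ M_1 ⊆ ⋯ ⊆ M_t = k ⊕ V of kG-modules such that for every i = 1,…,t there is an elementary abelian p-subgroup E_i ⊆ G and a finitely generated kE_i-module W_i with M_i/M_{i−1} ≅ (W_i)↑_{E_i}^G, the kG-module induced from W_i. -/

import Mathlib

variable {k : Type} [Field k] {G : Type} [Group G]

/-- A subgroup is elementary abelian for the prime `p` if it is commutative and every
element has order dividing `p`. -/
def IsElementaryAbelian (p : ℕ) (E : Subgroup G) : Prop :=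
  (∀ x ∈ E, x ^ p = 1) ∧ ∀ x ∈ E, ∀ y ∈ E, x * y = y * x

/-- A representation `(Q, σ)` of `G` over `k` is induced from a representation of the
subgroup `E`, `Q ≅ W↑_E^G = kG ⊗_{kE} W`, if and only if it admits an `E`-stable subspace
`W` such that `Q` is the (internal) direct sum of the translates `g • W`, one for each
left coset `g E` of `E` in `G` (imprimitivity). -/
def IsInducedFrom {Q : Type} [AddCommGroup Q] [Module k Q]
    (σ : Representation k G Q) (E : Subgroup G) : Prop :=
  ∃ W : Submodule k Q,
    (∀ e ∈ E, W.map (σ e) = W)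
    ∧ iSupIndep (fun c : G ⧸ E => W.map (σ (Quotient.out c)))
    ∧ (⨆ c : G ⧸ E, W.map (σ (Quotient.out c))) = ⊤

/-- The representation of `G` on `k ⊕ V`, acting trivially on `k`. -/
noncomputable def trivProdRep {V : Type} [AddCommGroup V] [Module k V]
    (ρ : Representation k G V) : Representation k G (k × V) where
  toFun g := (LinearMap.id : k →ₗ[k] k).prodMap (ρ g)
  map_one' := by
    apply LinearMap.ext
    intro x
    simp [Prod.ext_iff]
  map_mul' g h := by
    apply LinearMap.ext
    intro x
    simp [Prod.ext_iff]

/-!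
Let `G` be a `p`-group that is not elementary abelian. Some `w ≠ 1` is killed by all homomorphisms
`G → ℤ/p`; let `z` be a power of `w` of order `p`. The coset cocycle of `⟨z⟩`, with values in
`⟨z⟩ ≅ ℤ/p`, lets `G` act on the join of `p`-gons indexed by `G ⧸ ⟨z⟩`, a sphere, and this action
commutes with the diagonal rotations. In the quotient by the rotations, a lens space, no cell is
fixed by `G`: a fixed cell would give a homomorphism `G → ℤ/p` that does not kill `z`. The
orientation characters are absorbed by Clifford operators on an exterior algebra, of which the
trivial module is a summand. Passing from the sphere to the lens space multiplies the top class
by `p = 0`, so the dimension shift along the complex of the lens space splits, and every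
finite-dimensional module is a direct summand of an iterated extension of modules induced from
proper subgroups. Induction on `|G|` reduces `p`-groups to their elementary abelian subgroups, and
a Sylow subgroup has invertible index, which gives the general case. Adding the complements of the
direct summands turns iterated extensions into a filtration.
-/

open Representation

section FunctionRepresentations

variable {R : Type*} [CommSemiring R] {G : Type*} [Group G] {V : Type*} [AddCommMonoid V]
  [Module R V] (X : Type*) [MulAction G X]

/-- The representation of `G` on the functions from a `G`-set `X` to a representation `ρ`, given
by `(g • f) x = ρ g (f (g⁻¹ • x))`. If `X = G ⧸ E`, this is the representation induced from
the restriction of `ρ` to `E`. -/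
def funRep (ρ : Representation R G V) : Representation R G (X → V) where
  toFun g := LinearMap.pi fun x => ρ g ∘ₗ LinearMap.proj (g⁻¹ • x)
  map_one' := by ext1; funext x; simp
  map_mul' g h := by ext1; funext x; simp [mul_smul]

variable {X} (ρ : Representation R G V)

lemma funRep_apply (g : G) (f : X → V) (x : X) : funRep X ρ g f x = ρ g (f (g⁻¹ • x)) := rfl

@[simp]
lemma funRep_apply_smul (g : G) (f : X → V) (x : X) : funRep X ρ g f (g • x) = ρ g (f x) := by
  rw [funRep_apply, inv_smul_smul]

lemma funRep_single [DecidableEq X] (g : G) (x : X) (v : V) :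
    funRep X ρ g (Pi.single x v) = Pi.single (g • x) (ρ g v) := by
  funext y
  obtain ⟨y, rfl⟩ := MulAction.surjective g y
  rw [funRep_apply_smul]
  obtain rfl | hy := eq_or_ne y x
  · simp
  · simp [hy]

/-- Pullback of functions along a map of `G`-sets, as a map of representations. -/
def funRepPullback {Y : Type*} [MulAction G Y] (j : Y →[G] X) :
    IntertwiningMap (funRep X ρ) (funRep Y ρ) where
  toLinearMap := LinearMap.funLeft R V j
  isIntertwining' g := by
    ext1 f
    funext y
    simp [funRep_apply]

@[simp]
lemma funRepPullback_apply {Y : Type*} [MulAction G Y] (j : Y →[G] X) (f : X → V) (y : Y) :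
    funRepPullback ρ j f y = f (j y) := rfl

open Classical in
/-- Extension by zero from an invariant subset of a `G`-set, as a map of representations. -/
noncomputable def funRepExtend (Y : SubMulAction G X) :
    IntertwiningMap (funRep Y ρ) (funRep X ρ) where
  toFun f x := if h : x ∈ Y then f ⟨x, h⟩ else 0
  map_add' f f' := by
    funext x
    by_cases h : x ∈ Y <;> simp [h]
  map_smul' a f := by
    funext x
    by_cases h : x ∈ Y <;> simp [h]
  isIntertwining' g := by
    ext1 f
    funext x
    obtain ⟨x, rfl⟩ := MulAction.surjective g x
    have hmem : g • x ∈ Y ↔ x ∈ Y := SubMulAction.smul_mem_iff' Y g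
    by_cases h : x ∈ Y
    · simpa [h, hmem] using funRep_apply_smul ρ g f ⟨x, h⟩
    · simp [h, hmem]

lemma funRepExtend_apply_coe (Y : SubMulAction G X) (f : Y → V) (y : Y) :
    funRepExtend ρ Y f y = f y := dif_pos y.2

lemma funRepExtend_apply_of_notMem {Y : SubMulAction G X} {x : X} (hx : x ∉ Y) (f : Y → V) :
    funRepExtend ρ Y f x = 0 := dif_neg hx

lemma funRepExtend_injective (Y : SubMulAction G X) : Function.Injective (funRepExtend ρ Y) :=
  fun f f' h => funext fun y => by
    rw [← funRepExtend_apply_coe ρ Y f, h, funRepExtend_apply_coe]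

lemma mem_range_funRepExtend {Y : SubMulAction G X} {f : X → V} :
    f ∈ Set.range (funRepExtend ρ Y) ↔ ∀ x ∉ Y, f x = 0 := by
  refine ⟨?_, fun h => ⟨fun y => f y, funext fun x => ?_⟩⟩
  · rintro ⟨f, rfl⟩ x hx
    exact funRepExtend_apply_of_notMem ρ hx f
  · by_cases hx : x ∈ Y
    · exact funRepExtend_apply_coe ρ Y _ ⟨x, hx⟩
    · rw [funRepExtend_apply_of_notMem ρ hx, h x hx]

variable (X) in
/-- Summation of the values of a function, as a map of representations. -/
def funRepSum [Fintype X] : IntertwiningMap (funRep X ρ) ρ where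
  toLinearMap := ∑ x, LinearMap.proj x
  isIntertwining' g := by
    ext1 f
    simp only [LinearMap.comp_apply, LinearMap.sum_apply, LinearMap.proj_apply, map_sum]
    rw [← Equiv.sum_comp (MulAction.toPerm g)]
    simp

@[simp]
lemma funRepSum_apply [Fintype X] (f : X → V) : funRepSum X ρ f = ∑ x, f x := by
  change (∑ x, LinearMap.proj x : (X → V) →ₗ[R] V) f = _
  simp

end FunctionRepresentations

section InducedRepresentations

variable {G : Type*} [Group G]

/-- The element of `H` by which left multiplication by `g` differs from the action on the chosen
representatives of the cosets of `H`. -/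
noncomputable def cosetCocycle (H : Subgroup G) (g : G) (c : G ⧸ H) : H :=
  ⟨(g • c).out⁻¹ * (g * c.out), by
    rw [← QuotientGroup.eq, QuotientGroup.out_eq']
    conv_lhs => rw [← QuotientGroup.out_eq' c]
    rfl⟩

lemma coe_cosetCocycle (H : Subgroup G) (g : G) (c : G ⧸ H) :
    (cosetCocycle H g c : G) = (g • c).out⁻¹ * (g * c.out) := rfl

lemma cosetCocycle_mul (H : Subgroup G) (g h : G) (c : G ⧸ H) :
    cosetCocycle H (g * h) c = cosetCocycle H g (h • c) * cosetCocycle H h c := by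
  ext
  simp [coe_cosetCocycle, mul_smul, mul_assoc]

lemma cosetCocycle_one (H : Subgroup G) (c : G ⧸ H) : cosetCocycle H 1 c = 1 := by
  ext
  simp [coe_cosetCocycle]

variable {R : Type*} [CommSemiring R] {H : Subgroup G} {W : Type*} [AddCommMonoid W] [Module R W]

/-- The representation of `G` induced from a representation of the subgroup `H`, realised on
the functions on `G ⧸ H` by means of coset representatives. -/
noncomputable def indRep (σ : Representation R H W) : Representation R G (G ⧸ H → W) where
  toFun g := LinearMap.pi fun c => σ (cosetCocycle H g (g⁻¹ • c)) ∘ₗ LinearMap.proj (g⁻¹ • c)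
  map_one' := by
    ext1 f
    funext c
    simp [cosetCocycle_one]
  map_mul' g h := by
    ext1 f
    funext c
    simp [cosetCocycle_mul, mul_smul]

lemma indRep_apply (σ : Representation R H W) (g : G) (f : G ⧸ H → W) (c : G ⧸ H) :
    indRep σ g f c = σ (cosetCocycle H g (g⁻¹ • c)) (f (g⁻¹ • c)) := rfl

lemma indRep_apply_smul (σ : Representation R H W) (g : G) (f : G ⧸ H → W) (c : G ⧸ H) :
    indRep σ g f (g • c) = σ (cosetCocycle H g c) (f c) := by
  rw [indRep_apply, inv_smul_smul]

end InducedRepresentations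

section BuiltFrom

/-- The smallest class of representations of `G` that contains the finite-dimensional
representations `funRep (G ⧸ E) ρ` for the subgroups `E` satisfying `S` and is closed under
extensions and direct summands. By the projection formula these generators have the same summands
as the finite-dimensional representations induced from such `E`. -/
inductive BuiltFrom (S : Subgroup G → Prop) :
    ∀ {V : Type} [AddCommGroup V] [Module k V], Representation k G V → Prop
  | zero {V : Type} [AddCommGroup V] [Module k V] [Subsingleton V] (ρ : Representation k G V) :
      BuiltFrom S ρ
  | coset {V : Type} [AddCommGroup V] [Module k V] [FiniteDimensional k V] (E : Subgroup G)
      (hE : S E) (ρ : Representation k G V) : BuiltFrom S (funRep (G ⧸ E) ρ)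
  | ext {U V W : Type} [AddCommGroup U] [Module k U] [AddCommGroup V] [Module k V]
      [AddCommGroup W] [Module k W]
      {τ : Representation k G U} {ρ : Representation k G V} {σ : Representation k G W}
      (f : IntertwiningMap τ ρ) (g : IntertwiningMap ρ σ) (hf : Function.Injective f)
      (hfg : Function.Exact f g) (hg : Function.Surjective g)
      (hτ : BuiltFrom S τ) (hσ : BuiltFrom S σ) : BuiltFrom S ρ
  | retract {U V : Type} [AddCommGroup U] [Module k U] [AddCommGroup V] [Module k V]
      {τ : Representation k G U} {ρ : Representation k G V}
      (i : IntertwiningMap ρ τ) (r : IntertwiningMap τ ρ) (hri : ∀ v, r (i v) = v)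
      (hτ : BuiltFrom S τ) : BuiltFrom S ρ

namespace BuiltFrom

variable {S : Subgroup G → Prop} {V : Type} [AddCommGroup V] [Module k V]
  {ρ : Representation k G V}

lemma finiteDimensional [Finite G] (h : BuiltFrom S ρ) : FiniteDimensional k V := by
  induction h with
  | zero _ => infer_instance
  | coset E _ _ => infer_instance
  | ext f g _ hfg hg _ _ ihU ihW =>
    have := ihU
    have := ihW
    have : Module.Finite k (LinearMap.ker g.toLinearMap) := by
      rw [LinearMap.exact_iff.1 hfg]
      infer_instance
    have := Module.Finite.equiv (g.toLinearMap.quotKerEquivOfSurjective hg).symm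
    exact Module.Finite.of_submodule_quotient (LinearMap.ker g.toLinearMap)
  | retract i r hri _ ih =>
    exact Module.Finite.of_surjective r.toLinearMap fun v => ⟨i v, hri v⟩

lemma of_equiv {U : Type} [AddCommGroup U] [Module k U] {τ : Representation k G U}
    (h : BuiltFrom S τ) (e : ρ.Equiv τ) : BuiltFrom S ρ :=
  retract e.toIntertwiningMap e.symm.toIntertwiningMap e.symm_apply_apply h

/-- The operators `e x` need not be projections: only the fact that they add up to the identity
and are permuted by `G` in the same way as the points of `X` matters. -/
lemma of_partition {X : Type} [Fintype X] [MulAction G X] (h : BuiltFrom S (funRep X ρ))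
    (e : X → V →ₗ[k] V) (he : ∀ g x v, ρ g (e x v) = e (g • x) (ρ g v))
    (hsum : ∀ v, ∑ x, e x v = v) : BuiltFrom S ρ :=
  retract
    { toLinearMap := LinearMap.pi e
      isIntertwining' := fun g => by
        ext1 v
        funext x
        simp [funRep_apply, he] }
    (funRepSum X ρ) (fun v => by rw [funRepSum_apply]; exact hsum v) h

protected theorem funRep [FiniteDimensional k V] (X : Type) [Finite X] [MulAction G X]
    (hS : ∀ x : X, S (MulAction.stabilizer G x)) (ρ : Representation k G V) :
    BuiltFrom S (funRep X ρ) := by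
  induction hn : Nat.card X using Nat.strong_induction_on generalizing X with
  | _ n ih =>
    rcases isEmpty_or_nonempty X with hX | ⟨⟨x⟩⟩
    · exact zero _
    let orbit : G ⧸ MulAction.stabilizer G x →[G] X :=
      ⟨MulAction.ofQuotientStabilizer G x, MulAction.ofQuotientStabilizer_smul G x⟩
    have horbit : Function.Injective orbit := MulAction.injective_ofQuotientStabilizer G x
    let rest : SubMulAction G X :=
      { carrier := (Set.range orbit)ᶜ
        smul_mem' := fun g y hy ⟨c, hc⟩ => hy ⟨g⁻¹ • c, by rw [map_smul, hc, inv_smul_smul]⟩ }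
    have hrest : ∀ y, y ∉ rest ↔ ∃ c, orbit c = y := fun y => not_not
    have hcard : Nat.card rest < n :=
      hn ▸ Finite.card_subtype_lt ((hrest x).2 ⟨(1 : G), one_smul G x⟩)
    refine ext (funRepExtend ρ rest) (funRepPullback ρ orbit) (funRepExtend_injective ρ rest)
      (fun f => ?_) horbit.surjective_comp_right
      (ih _ hcard rest (fun y => SubMulAction.stabilizer_of_subMul y ▸ hS y) rfl)
      (coset _ (hS x) ρ)
    rw [mem_range_funRepExtend]
    simp [hrest, funext_iff]

end BuiltFrom

end BuiltFrom

section InductionInStages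

variable {R : Type*} [CommSemiring R] {G : Type*} [Group G] {H : Subgroup G}
  {V W : Type*} [AddCommMonoid V] [Module R V] [AddCommMonoid W] [Module R W]

/-- The map of induced representations determined by a map of representations of a subgroup. -/
noncomputable def indRepMap {ρ : Representation R H V} {σ : Representation R H W}
    (f : IntertwiningMap ρ σ) : IntertwiningMap (indRep ρ) (indRep σ) where
  toLinearMap := f.toLinearMap.compLeft (G ⧸ H)
  isIntertwining' g := by
    ext1 v
    funext c
    simp [indRep_apply, f.isIntertwining]

@[simp]
lemma indRepMap_apply {ρ : Representation R H V} {σ : Representation R H W}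
    (f : IntertwiningMap ρ σ) (v : G ⧸ H → V) (c : G ⧸ H) : indRepMap f v c = f (v c) := rfl

/-- The projection formula `k(G ⧸ H) ⊗ ρ ≅ (ρ↓H)↑G`. -/
noncomputable def funRepEquivIndRep (H : Subgroup G) (ρ : Representation R G V) :
    (funRep (G ⧸ H) ρ).Equiv (indRep (ρ.comp H.subtype)) :=
  .mk (LinearEquiv.piCongrRight fun c =>
      .ofLinearMap (ρ c.out⁻¹) (ρ c.out) (by ext; simp) (by ext; simp)) fun g => by
    ext1 f
    funext c
    obtain ⟨c, rfl⟩ := MulAction.surjective g c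
    simp [indRep_apply_smul, coe_cosetCocycle]

/-- The map `H ⧸ K → G ⧸ K` induced by the inclusion of a subgroup `H` of `G`. -/
def cosetInclusion (K : Subgroup H) : H ⧸ K → G ⧸ K.map H.subtype :=
  Quotient.map' Subtype.val fun a b hab => by
    rw [QuotientGroup.leftRel_apply] at hab ⊢
    exact ⟨_, hab, rfl⟩

lemma cosetInclusion_smul (K : Subgroup H) (h : H) (x : H ⧸ K) :
    cosetInclusion K (h • x) = (h : G) • cosetInclusion K x := by
  induction x using QuotientGroup.induction_on
  rfl

/-- The coset of `K` in `G` which corresponds to a coset `y` of `H` in `G` and a coset `x` of `K`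
in `H`. -/
noncomputable def stagesCoset (K : Subgroup H) (y : G ⧸ H) (x : H ⧸ K) :
    G ⧸ K.map H.subtype :=
  y.out • cosetInclusion K x

lemma stagesCoset_smul (K : Subgroup H) (g : G) (y : G ⧸ H) (x : H ⧸ K) :
    stagesCoset K (g • y) (cosetCocycle H g y • x) = g • stagesCoset K y x := by
  simp only [stagesCoset, cosetInclusion_smul, coe_cosetCocycle, mul_smul, smul_inv_smul]

end InductionInStages

namespace BuiltFrom

variable {S : Subgroup G → Prop} {V : Type} [AddCommGroup V] [Module k V]

protected theorem indRep [Finite G] {H : Subgroup G} {T : Subgroup H → Prop}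
    {ρ : Representation k H V} (h : BuiltFrom T ρ) (hTS : ∀ K, T K → S (K.map H.subtype)) :
    BuiltFrom S (indRep ρ) := by
  classical
  induction h with
  | zero ρ => exact zero _
  | ext f g hf hfg hg _ _ ihτ ihσ =>
    refine ext (indRepMap f) (indRepMap g) hf.comp_left (fun v => ?_) hg.comp_left ihτ ihσ
    simp [funext_iff, hfg _, Classical.skolem]
  | retract i r hri _ ih =>
    exact retract (indRepMap i) (indRepMap r) (fun v => funext fun c => hri (v c)) ih
  | coset K hK ρ =>
    let : Fintype (G ⧸ K.map H.subtype) := Fintype.ofFinite _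
    let restrict (c : G ⧸ K.map H.subtype) : (G ⧸ H → H ⧸ K → _) →ₗ[k] G ⧸ H → H ⧸ K → _ :=
      LinearMap.pi fun y => LinearMap.pi fun x =>
        if stagesCoset K y x = c then LinearMap.proj x ∘ₗ LinearMap.proj y else 0
    have restrict_apply c F y x :
        restrict c F y x = if stagesCoset K y x = c then F y x else 0 := by
      simp only [restrict, LinearMap.pi_apply]
      split_ifs <;> rfl
    refine of_partition (coset _ (hTS K hK) _) restrict (fun g c F => ?_) fun F => ?_
    · funext y x
      obtain ⟨y, rfl⟩ := MulAction.surjective g y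
      obtain ⟨x, rfl⟩ := MulAction.surjective (cosetCocycle H g y) x
      simp only [restrict_apply, indRep_apply_smul, funRep_apply_smul, stagesCoset_smul,
        smul_left_cancel_iff]
      split_ifs <;> simp
    · funext y x
      simp [restrict_apply]

lemma trans {T : Subgroup G → Prop} {ρ : Representation k G V} (h : BuiltFrom S ρ)
    (hST : ∀ E, S E → ∀ (W : Type) [AddCommGroup W] [Module k W] [FiniteDimensional k W]
      (σ : Representation k E W), BuiltFrom T (_root_.indRep σ)) : BuiltFrom T ρ := by
  induction h with
  | zero ρ => exact zero ρ
  | coset E hE ρ => exact (hST E hE _ (ρ.comp E.subtype)).of_equiv (funRepEquivIndRep E ρ)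
  | ext f g hf hfg hg _ _ ihτ ihσ => exact ext f g hf hfg hg ihτ ihσ
  | retract i r hri _ ih => exact retract i r hri ih

/-- Higman's criterion: `id = ∑ c : G ⧸ H, [G : H]⁻¹ • id`. -/
lemma of_index_ne_zero {H : Subgroup G} {ρ : Representation k G V} (hH : (H.index : k) ≠ 0)
    (h : BuiltFrom S (_root_.indRep (ρ.comp H.subtype))) : BuiltFrom S ρ := by
  have : H.FiniteIndex := ⟨fun h0 => hH (by rw [h0, Nat.cast_zero])⟩
  have := H.fintypeQuotientOfFiniteIndex
  refine of_partition (h.of_equiv (funRepEquivIndRep H ρ)) (fun _ => (H.index : k)⁻¹ • LinearMap.id)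
    (fun g _ v => by simp) fun v => ?_
  simp [← Nat.card_eq_fintype_card, ← Subgroup.index_eq_card, ← Nat.cast_smul_eq_nsmul k,
    smul_smul, hH]

end BuiltFrom

section Cosyzygy

variable {R : Type*} [CommRing R] {G : Type*} [Group G] {B C D : Type*} [AddCommGroup B]
  [Module R B] [AddCommGroup C] [Module R C] [AddCommGroup D] [Module R D]

variable (R G B) in
/-- The space of functions on `G` that vanish at `1`. It is the cokernel of the coaction map
`b ↦ (x ↦ ρ x b)` from a representation `ρ` to the functions on `G`. -/
abbrev PointedFun : Submodule R (G → B) := LinearMap.ker (LinearMap.proj (1 : G))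

namespace PointedFun

@[simp]
lemma apply_one (f : PointedFun R G B) : f.1 1 = 0 := f.2

/-- Post-composition with a linear map on functions that vanish at `1`. -/
def map (u : B →ₗ[R] C) : PointedFun R G B →ₗ[R] PointedFun R G C :=
  (u.compLeft G).restrict fun f hf => by simpa using congrArg u hf

@[simp]
lemma map_apply (u : B →ₗ[R] C) (f : PointedFun R G B) (x : G) : (map u f).1 x = u (f.1 x) := rfl

lemma map_injective {u : B →ₗ[R] C} (hu : Function.Injective u) :
    Function.Injective (map (G := G) u) :=
  fun _ _ h => Subtype.ext <| funext fun x => hu (congrFun (congrArg Subtype.val h) x)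

lemma map_surjective {u : B →ₗ[R] C} (hu : Function.Surjective u) :
    Function.Surjective (map (G := G) u) := by
  classical
  intro f
  choose b hb using hu
  refine ⟨⟨Function.update (b ∘ f.1) 1 0, by simp⟩, Subtype.ext <| funext fun x => ?_⟩
  rcases eq_or_ne x 1 with rfl | hx
  · simp
  · simp [hx, hb]

lemma map_exact {u : B →ₗ[R] C} {v : C →ₗ[R] D} (hu : Function.Injective u)
    (huv : Function.Exact u v) : Function.Exact (map (G := G) u) (map v) := by
  intro f
  constructor
  · intro hf
    choose b hb using fun x => (huv (f.1 x)).1 (congrFun (congrArg Subtype.val hf) x)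
    exact ⟨⟨b, hu (by simp [hb])⟩, Subtype.ext (funext hb)⟩
  · rintro ⟨f, rfl⟩
    exact Subtype.ext <| funext fun x => huv.apply_apply_eq_zero (f.1 x)

end PointedFun

/-- The cosyzygy of `ρ`: the representation on the cokernel of the embedding of `ρ` into the
functions on `G`. -/
def cosyzygy (ρ : Representation R G B) : Representation R G (PointedFun R G B) where
  toFun g :=
    { toFun f := ⟨fun x => f.1 (x * g) - ρ x (f.1 g), by simp⟩
      map_add' f f' := by
        ext x
        simp only [Submodule.coe_add, Pi.add_apply, map_add]
        abel
      map_smul' a f := by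
        ext x
        simp [smul_sub] }
  map_one' := by
    ext f x
    simp
  map_mul' g h := by
    ext f x
    simp [mul_assoc]

lemma cosyzygy_apply (ρ : Representation R G B) (g : G) (f : PointedFun R G B) (x : G) :
    (cosyzygy ρ g f).1 x = f.1 (x * g) - ρ x (f.1 g) := rfl

/-- The map of cosyzygies determined by a map of representations. -/
def cosyzygyMap {ρ : Representation R G B} {σ : Representation R G C} (u : IntertwiningMap ρ σ) :
    IntertwiningMap (cosyzygy ρ) (cosyzygy σ) where
  toLinearMap := PointedFun.map u.toLinearMap
  isIntertwining' g := by
    ext f x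
    simp [cosyzygy_apply, u.isIntertwining]

/-- The extension of `cosyzygy ρ` by `θ` obtained from the extension
`0 → ρ → (G → B) → cosyzygy ρ → 0` by pushing out along `β : ρ → θ`. -/
def cosyzygyExt {ρ : Representation R G B} {θ : Representation R G D} (β : IntertwiningMap ρ θ) :
    Representation R G (D × PointedFun R G B) where
  toFun g :=
    { toFun x := (θ g x.1 + β (x.2.1 g), cosyzygy ρ g x.2)
      map_add' x y := by
        refine Prod.ext ?_ (by simp)
        simp only [Prod.fst_add, Prod.snd_add, Submodule.coe_add, Pi.add_apply, map_add]
        abel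
      map_smul' a x := by simp }
  map_one' := by
    ext1 <;> ext1 <;> simp
  map_mul' g h := by
    refine LinearMap.ext fun x => Prod.ext ?_ (by simp)
    simp [cosyzygy_apply, β.isIntertwining]

lemma cosyzygyExt_apply {ρ : Representation R G B} {θ : Representation R G D}
    (β : IntertwiningMap ρ θ) (g : G) (x : D × PointedFun R G B) :
    cosyzygyExt β g x = (θ g x.1 + β (x.2.1 g), cosyzygy ρ g x.2) := rfl

/-- A map from `θ` which is trivial on the image of `β` extends by zero to the pushout. -/
def cosyzygyExtDesc {ρ : Representation R G B} {θ : Representation R G D} {σ : Representation R G C}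
    (β : IntertwiningMap ρ θ) (u : IntertwiningMap θ σ) (huβ : ∀ b, u (β b) = 0) :
    IntertwiningMap (cosyzygyExt β) σ where
  toLinearMap := u.toLinearMap ∘ₗ LinearMap.fst R D _
  isIntertwining' g := by
    ext1 <;> ext1 <;> simp [cosyzygyExt_apply, huβ, u.isIntertwining]

@[simp]
lemma cosyzygyExtDesc_apply {ρ : Representation R G B} {θ : Representation R G D}
    {σ : Representation R G C} (β : IntertwiningMap ρ θ) (u : IntertwiningMap θ σ)
    (huβ : ∀ b, u (β b) = 0) (x : D × PointedFun R G B) :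
    cosyzygyExtDesc β u huβ x = u x.1 := rfl

/-- The failure of a linear map to be equivariant, as a function on the group. -/
def equivarianceDefect (θ : Representation R G D) (ρ : Representation R G B) (φ : D →ₗ[R] B) :
    D →ₗ[R] PointedFun R G B where
  toFun c := ⟨fun x => ρ x (φ c) - φ (θ x c), by simp⟩
  map_add' c c' := by
    ext x
    simp only [map_add, Submodule.coe_add, Pi.add_apply]
    abel
  map_smul' a c := by
    ext x
    simp [smul_sub]

lemma equivarianceDefect_apply (θ : Representation R G D) (ρ : Representation R G B)
    (φ : D →ₗ[R] B) (c : D) (x : G) :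
    (equivarianceDefect θ ρ φ c).1 x = ρ x (φ c) - φ (θ x c) := rfl

/-- A linear map `φ` which need not be equivariant can be subtracted from an equivariant map at
the cost of enlarging the target to the pushout along `v`. -/
def cosyzygyExtLift {θ : Representation R G C} {ρ : Representation R G B}
    {η : Representation R G D} (q : IntertwiningMap θ η) (v : IntertwiningMap ρ η) (φ : C →ₗ[R] B) :
    IntertwiningMap θ (cosyzygyExt v) where
  toLinearMap := (q.toLinearMap - v.toLinearMap ∘ₗ φ).prod (equivarianceDefect θ ρ φ)
  isIntertwining' g := by
    ext c : 2
    · simp [cosyzygyExt_apply, equivarianceDefect_apply, q.isIntertwining, v.isIntertwining]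
    · ext x
      simp [cosyzygyExt_apply, equivarianceDefect_apply, cosyzygy_apply]

lemma cosyzygyExtLift_apply {θ : Representation R G C} {ρ : Representation R G B}
    {η : Representation R G D} (q : IntertwiningMap θ η) (v : IntertwiningMap ρ η)
    (φ : C →ₗ[R] B) (c : C) :
    cosyzygyExtLift q v φ c = (q c - v (φ c), equivarianceDefect θ ρ φ c) := rfl

end Cosyzygy

namespace BuiltFrom

variable {S : Subgroup G → Prop} {B D : Type} [AddCommGroup B] [Module k B] [AddCommGroup D]
  [Module k D] {ρ : Representation k G B} {θ : Representation k G D}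

protected theorem cosyzygy [Finite G] (h : BuiltFrom S ρ) : BuiltFrom S (cosyzygy ρ) := by
  classical
  induction h with
  | zero ρ => exact zero _
  | ext f g hf hfg hg _ _ ihτ ihσ =>
    exact ext (cosyzygyMap f) (cosyzygyMap g) (PointedFun.map_injective hf)
      (PointedFun.map_exact hf hfg) (PointedFun.map_surjective hg) ihτ ihσ
  | retract i r hri _ ih =>
    exact retract (cosyzygyMap i) (cosyzygyMap r)
      (fun f => Subtype.ext <| funext fun x => hri (f.1 x)) ih
  | @coset V _ _ _ E hE ρ =>
    let : Fintype (G ⧸ E) := Fintype.ofFinite _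
    let indicator (c : G ⧸ E) : (G → G ⧸ E → V) →ₗ[k] G → G ⧸ E → V :=
      LinearMap.pi fun x => LinearMap.pi fun y =>
        if x⁻¹ • y = c then LinearMap.proj y ∘ₗ LinearMap.proj x else 0
    have indicator_apply c f x y : indicator c f x y = if x⁻¹ • y = c then f x y else 0 := by
      simp only [indicator, LinearMap.pi_apply]
      split_ifs <;> rfl
    let restrict (c : G ⧸ E) : PointedFun k G (G ⧸ E → V) →ₗ[k] PointedFun k G (G ⧸ E → V) :=
      (indicator c).restrict fun f hf => funext fun y => by
        simp [indicator_apply, show f 1 = 0 from hf]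
    have restrict_apply c f x y : (restrict c f).1 x y = if x⁻¹ • y = c then f.1 x y else 0 :=
      indicator_apply c f.1 x y
    refine of_partition (coset _ hE _) restrict (fun g c f => ?_) fun f => ?_
    · ext x y
      have hy : g⁻¹ • x⁻¹ • y = c ↔ x⁻¹ • y = g • c := inv_smul_eq_iff
      simp only [cosyzygy_apply, funRep_apply, restrict_apply, Pi.sub_apply, mul_inv_rev, mul_smul,
        hy]
      split_ifs <;> simp
    · ext x y
      simp [restrict_apply]

protected theorem cosyzygyExt [Finite G] (hρ : BuiltFrom S ρ) (hθ : BuiltFrom S θ)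
    (β : IntertwiningMap ρ θ) : BuiltFrom S (cosyzygyExt β) :=
  ext (τ := θ) (σ := cosyzygy ρ)
    { toLinearMap := LinearMap.inl k D _
      isIntertwining' := fun g => by ext1; simp [cosyzygyExt_apply] }
    { toLinearMap := LinearMap.snd k D _
      isIntertwining' := fun g => by ext1 <;> ext1 <;> simp [cosyzygyExt_apply] }
    LinearMap.inl_injective Function.Exact.inl_snd LinearMap.snd_surjective hθ hρ.cosyzygy

end BuiltFrom

section SplittingResolution

lemma exists_linearMap_comp_eq_of_ker_le {A B C : Type*} [AddCommGroup A] [Module k A]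
    [AddCommGroup B] [Module k B] [AddCommGroup C] [Module k C] (f : A →ₗ[k] B) (u : A →ₗ[k] C)
    (h : LinearMap.ker f ≤ LinearMap.ker u) : ∃ φ : B →ₗ[k] C, φ ∘ₗ f = u := by
  obtain ⟨φ, hφ⟩ := LinearMap.exists_extend
    ((LinearMap.ker f).liftQ u h ∘ₗ f.quotKerEquivRange.symm.toLinearMap)
  refine ⟨φ, LinearMap.ext fun a => ?_⟩
  have hfa := LinearMap.congr_fun hφ (f.quotKerEquivRange (Submodule.Quotient.mk a))
  simpa using hfa

lemma exists_intertwiningMap_comp_eq_of_ker_le {F E C : Type*} [AddCommGroup F] [Module k F]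
    [AddCommGroup E] [Module k E] [AddCommGroup C] [Module k C] {θ : Representation k G F}
    {η : Representation k G E} {σ : Representation k G C} {q : IntertwiningMap θ η}
    (hq : Function.Surjective q) (u : IntertwiningMap θ σ) (h : ∀ c, q c = 0 → u c = 0) :
    ∃ φ : IntertwiningMap η σ, ∀ c, φ (q c) = u c := by
  obtain ⟨φ, hφ⟩ := exists_linearMap_comp_eq_of_ker_le q.toLinearMap u.toLinearMap h
  have hφ c : φ (q c) = u c := LinearMap.congr_fun hφ c
  refine ⟨⟨φ, fun g => LinearMap.ext fun x => ?_⟩, hφ⟩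
  obtain ⟨c, rfl⟩ := hq x
  simp [← q.isIntertwining, hφ, u.isIntertwining]

/-- A resolution of `σ` by a complex `θ` with differential `d`, augmentation `ε` and
chain groups `chains 1, …, chains m`, together with a quotient complex `q : θ → η` to which the
augmentation descends and in which the cycles of top degree `m` become zero. Thus the class in
`Ext^m` that is represented by the resolution vanishes after it is pushed to the quotient. -/
structure SplittingResolution {F E C : Type} [AddCommGroup F] [Module k F] [AddCommGroup E]
    [Module k E] [AddCommGroup C] [Module k C] (θ : Representation k G F)
    (η : Representation k G E) (σ : Representation k G C) where
  d : IntertwiningMap θ θ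
  ε : IntertwiningMap θ σ
  chains : ℕ → Subrepresentation θ
  m : ℕ
  one_lt_m : 1 < m
  d_d : ∀ c, d (d c) = 0
  ε_d : ∀ c, ε (d c) = 0
  exists_ε_eq : ∀ s, ∃ c ∈ chains 1, ε c = s
  exists_d_eq_of_ε_eq_zero : ∀ c ∈ chains 1, ε c = 0 → ∃ c' ∈ chains 2, d c' = c
  exists_d_eq : ∀ i, 2 ≤ i → i < m → ∀ c ∈ chains i, d c = 0 → ∃ c' ∈ chains (i + 1), d c' = c
  q : IntertwiningMap θ η
  q_surjective : Function.Surjective q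
  q_d_eq_zero : ∀ c, q c = 0 → q (d c) = 0
  ε_eq_zero : ∀ c, q c = 0 → ε c = 0
  q_eq_zero : ∀ c ∈ chains m, d c = 0 → q c = 0

namespace SplittingResolution

variable {F E C : Type} [AddCommGroup F] [Module k F] [AddCommGroup E] [Module k E]
  [AddCommGroup C] [Module k C] {θ : Representation k G F} {η : Representation k G E}
  {σ : Representation k G C} {S : Subgroup G → Prop}

variable (X : SplittingResolution θ η σ)

lemma exists_quotientD : ∃ D : IntertwiningMap η η, ∀ c, D (X.q c) = X.q (X.d c) :=
  exists_intertwiningMap_comp_eq_of_ker_le X.q_surjective (X.q.comp X.d) X.q_d_eq_zero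

/-- The differential of the quotient complex. -/
noncomputable def quotientD : IntertwiningMap η η := X.exists_quotientD.choose

@[simp]
lemma quotientD_q (c : F) : X.quotientD (X.q c) = X.q (X.d c) := X.exists_quotientD.choose_spec c

lemma quotientD_quotientD (x : E) : X.quotientD (X.quotientD x) = 0 := by
  obtain ⟨c, rfl⟩ := X.q_surjective x
  simp [X.d_d]

lemma exists_quotientε : ∃ ε : IntertwiningMap η σ, ∀ c, ε (X.q c) = X.ε c :=
  exists_intertwiningMap_comp_eq_of_ker_le X.q_surjective X.ε X.ε_eq_zero

/-- The augmentation of the quotient complex. -/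
noncomputable def quotientε : IntertwiningMap η σ := X.exists_quotientε.choose

@[simp]
lemma quotientε_q (c : F) : X.quotientε (X.q c) = X.ε c := X.exists_quotientε.choose_spec c

lemma quotientε_quotientD (x : E) : X.quotientε (X.quotientD x) = 0 := by
  obtain ⟨c, rfl⟩ := X.q_surjective x
  simp [X.ε_d]

/-- On the chains of degree `i` the map `q ∘ d` factors as `v ∘ u` through a representation built
from `S`, in such a way that `u` is zero on the cycles and that `v` takes values in the cycles
of the quotient complex. -/
def FactorsAt (S : Subgroup G → Prop) (i : ℕ) : Prop :=
  ∃ (B : Rep k G) (u : IntertwiningMap θ B.ρ) (v : IntertwiningMap B.ρ η), BuiltFrom S B.ρ ∧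
    (∀ c ∈ X.chains i, X.d c = 0 → u c = 0) ∧ (∀ c ∈ X.chains i, v (u c) = X.q (X.d c)) ∧
    (∀ b, X.quotientD (v b) = 0) ∧ ∀ b, X.quotientε (v b) = 0

lemma factorsAt_top (hη : BuiltFrom S η) : X.FactorsAt S X.m :=
  ⟨Rep.of η, X.q, X.quotientD, hη, X.q_eq_zero, fun c _ => X.quotientD_q c,
    X.quotientD_quotientD, X.quotientε_quotientD⟩

/-- If `u` is zero on the cycles of degree `i`, then it extends along `d` to a linear map `φ`, and
subtracting `φ` from `q` produces a map that is zero on the boundaries of these chains. -/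
lemma exists_cosyzygyExtLift_d_eq_zero {B : Type} [AddCommGroup B] [Module k B]
    {ρ : Representation k G B} {u : IntertwiningMap θ ρ} {v : IntertwiningMap ρ η} {i : ℕ}
    (hu : ∀ c ∈ X.chains i, X.d c = 0 → u c = 0)
    (hvu : ∀ c ∈ X.chains i, v (u c) = X.q (X.d c)) :
    ∃ φ : F →ₗ[k] B, ∀ c ∈ X.chains i, cosyzygyExtLift X.q v φ (X.d c) = 0 := by
  let A := (X.chains i).toSubmodule
  obtain ⟨φ, hφ⟩ := exists_linearMap_comp_eq_of_ker_le (X.d.toLinearMap ∘ₗ A.subtype)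
    (u.toLinearMap ∘ₗ A.subtype) fun c hc => hu c.1 c.2 hc
  have hφ c (hc : c ∈ X.chains i) : φ (X.d c) = u c := LinearMap.congr_fun hφ ⟨c, hc⟩
  refine ⟨φ, fun c hc => Prod.ext ?_ (Subtype.ext <| funext fun x => ?_)⟩
  · simp [cosyzygyExtLift_apply, hφ c hc, hvu c hc]
  · have hxc := (X.chains i).apply_mem_toSubmodule x hc
    simp [cosyzygyExtLift_apply, equivarianceDefect_apply, hφ c hc, ← X.d.isIntertwining,
      hφ _ hxc, u.isIntertwining]

variable {X} in
lemma FactorsAt.pred [Finite G] (hη : BuiltFrom S η) {i : ℕ} (hi : 2 ≤ i) (him : i < X.m)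
    (h : X.FactorsAt S (i + 1)) : X.FactorsAt S i := by
  obtain ⟨B, u, v, hB, hu, hvu, hDv, _⟩ := h
  obtain ⟨φ, hφ⟩ := X.exists_cosyzygyExtLift_d_eq_zero hu hvu
  refine ⟨Rep.of (cosyzygyExt v), cosyzygyExtLift X.q v φ, cosyzygyExtDesc v X.quotientD hDv,
    hB.cosyzygyExt hη v, fun c hc hdc => ?_, fun c _ => ?_, fun b => ?_, fun b => ?_⟩
  · obtain ⟨c', hc', rfl⟩ := X.exists_d_eq i hi him c hc hdc
    exact hφ c' hc'
  · simp [cosyzygyExtLift_apply, hDv]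
  · exact X.quotientD_quotientD b.1
  · exact X.quotientε_quotientD b.1

lemma factorsAt_two [Finite G] (hη : BuiltFrom S η) : X.FactorsAt S 2 :=
  Nat.decreasingInduction' (P := X.FactorsAt S) (fun _ him hi h => h.pred hη hi him) X.one_lt_m
    (X.factorsAt_top hη)

end SplittingResolution

theorem BuiltFrom.of_resolution [Finite G] {F E C : Type} [AddCommGroup F] [Module k F]
    [AddCommGroup E] [Module k E] [AddCommGroup C] [Module k C] {θ : Representation k G F}
    {η : Representation k G E} {σ : Representation k G C} {S : Subgroup G → Prop}
    (X : SplittingResolution θ η σ) (hη : BuiltFrom S η) : BuiltFrom S σ := by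
  obtain ⟨B, u, v, hB, hu, hvu, -, hεv⟩ := X.factorsAt_two hη
  obtain ⟨φ, hφ⟩ := X.exists_cosyzygyExtLift_d_eq_zero hu hvu
  let q' := cosyzygyExtLift X.q v φ
  let A := (X.chains 1).toSubmodule
  obtain ⟨s, hs⟩ := exists_linearMap_comp_eq_of_ker_le (X.ε.toLinearMap ∘ₗ A.subtype)
    (q'.toLinearMap ∘ₗ A.subtype) fun c hc => by
      obtain ⟨c', hc', hdc'⟩ := X.exists_d_eq_of_ε_eq_zero c.1 c.2 hc
      rw [LinearMap.mem_ker, LinearMap.comp_apply, Submodule.subtype_apply, ← hdc']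
      exact hφ c' hc'
  have hs c (hc : c ∈ X.chains 1) : s (X.ε c) = q' c := LinearMap.congr_fun hs ⟨c, hc⟩
  refine retract (τ := cosyzygyExt v) ⟨s, fun g => LinearMap.ext fun x => ?_⟩
    (cosyzygyExtDesc v X.quotientε hεv) (fun x => ?_) (hB.cosyzygyExt hη v)
  · obtain ⟨c, hc, rfl⟩ := X.exists_ε_eq x
    have hgc := (X.chains 1).apply_mem_toSubmodule g hc
    simp [← X.ε.isIntertwining, hs _ hgc, hs c hc, q'.isIntertwining]
  · obtain ⟨c, hc, rfl⟩ := X.exists_ε_eq x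
    change X.quotientε (s (X.ε c)).1 = X.ε c
    simp [hs c hc, q', cosyzygyExtLift_apply, hεv]

end SplittingResolution

section LocalOperators

variable {R : Type*} [CommRing R] {ι Q S : Type*} [DecidableEq ι] [Fintype Q] [AddCommGroup S]
  [Module R S]

/-- The operator on `S`-valued functions on the configurations `ι → Q` which applies the matrix
`t` to the coordinate `c` and the endomorphism `γ` to the values. -/
def localOp (c : ι) (γ : S →ₗ[R] S) (t : Matrix Q Q R) : ((ι → Q) → S) →ₗ[R] ((ι → Q) → S) where
  toFun f b := ∑ q, t (b c) q • γ (f (Function.update b c q))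
  map_add' f f' := by
    funext b
    simp [Finset.sum_add_distrib]
  map_smul' a f := by
    funext b
    simp [Finset.smul_sum, smul_comm a]

lemma localOp_apply (c : ι) (γ : S →ₗ[R] S) (t : Matrix Q Q R) (f : (ι → Q) → S) (b : ι → Q) :
    localOp c γ t f b = ∑ q, t (b c) q • γ (f (Function.update b c q)) := rfl

lemma localOp_apply_eq_zero {c : ι} {γ : S →ₗ[R] S} {t : Matrix Q Q R} {f : (ι → Q) → S}
    {b : ι → Q} (h : ∀ q, t (b c) q ≠ 0 → f (Function.update b c q) = 0) :
    localOp c γ t f b = 0 := by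
  refine Finset.sum_eq_zero fun q _ => ?_
  by_cases hq : t (b c) q = 0
  · rw [hq, zero_smul]
  · rw [h q hq, map_zero, smul_zero]

lemma localOp_localOp_self (c : ι) (γ γ' : S →ₗ[R] S) (t t' : Matrix Q Q R) (f : (ι → Q) → S) :
    localOp c γ t (localOp c γ' t' f) = localOp c (γ ∘ₗ γ') (t * t') f := by
  funext b
  simp only [localOp_apply, Function.update_self, Function.update_idem, map_sum, map_smul,
    Finset.smul_sum, Matrix.mul_apply, Finset.sum_smul, LinearMap.comp_apply, smul_smul]
  rw [Finset.sum_comm]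

lemma localOp_anticomm {c c' : ι} (hc : c ≠ c') {γ γ' : S →ₗ[R] S}
    (hγ : ∀ s, γ (γ' s) = -γ' (γ s)) (t t' : Matrix Q Q R) (f : (ι → Q) → S) :
    localOp c γ t (localOp c' γ' t' f) = -localOp c' γ' t' (localOp c γ t f) := by
  funext b
  simp only [localOp_apply, Function.update_of_ne hc, Function.update_of_ne hc.symm, map_sum,
    map_smul, Finset.smul_sum, Pi.neg_apply, ← Finset.sum_neg_distrib]
  rw [Finset.sum_comm]
  refine Finset.sum_congr rfl fun q _ => Finset.sum_congr rfl fun q' _ => ?_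
  rw [hγ, Function.update_comm hc, smul_neg, smul_neg, smul_comm]

lemma localOp_add (c : ι) (γ : S →ₗ[R] S) (t t' : Matrix Q Q R) (f : (ι → Q) → S) :
    localOp c γ (t + t') f = localOp c γ t f + localOp c γ t' f := by
  funext b
  simp [localOp_apply, add_smul, Finset.sum_add_distrib]

lemma localOp_sub (c : ι) (γ : S →ₗ[R] S) (t t' : Matrix Q Q R) (f : (ι → Q) → S) :
    localOp c γ (t - t') f = localOp c γ t f - localOp c γ t' f := by
  funext b
  simp [localOp_apply, sub_smul, Finset.sum_sub_distrib]

lemma localOp_zero (c : ι) (γ : S →ₗ[R] S) (f : (ι → Q) → S) :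
    localOp c γ (0 : Matrix Q Q R) f = 0 := by
  funext b
  simp [localOp_apply]

lemma localOp_one [DecidableEq Q] (c : ι) (f : (ι → Q) → S) :
    localOp c LinearMap.id (1 : Matrix Q Q R) f = f := by
  funext b
  simp [localOp_apply, Matrix.one_apply]

end LocalOperators

/-- The operators `γ c` are anticommuting involutions. They carry the signs in the tensor product
of complexes and allow a group to permute the factors without further signs. -/
structure IsCliffordFamily {R ι S : Type*} [CommRing R] [AddCommGroup S] [Module R S]
    (γ : ι → S →ₗ[R] S) : Prop where
  anticomm {c c' : ι} (hc : c ≠ c') (s : S) : γ c (γ c' s) = -γ c' (γ c s)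
  apply_apply (c : ι) (s : S) : γ c (γ c s) = s

/-- A complex with basis `Q` in the degrees `0, …, top`, given by the matrix `δ` of the
differential, together with a homotopy `h` between the identity and an operator `e` which is
zero except in the degree `top`. -/
structure LocalComplex (R Q : Type*) [CommRing R] [Fintype Q] [DecidableEq Q] where
  deg : Q → ℕ
  top : ℕ
  δ : Matrix Q Q R
  h : Matrix Q Q R
  e : Matrix Q Q R
  deg_le (q : Q) : deg q ≤ top
  deg_of_δ_ne_zero (q q' : Q) : δ q q' ≠ 0 → deg q' = deg q + 1
  deg_of_h_ne_zero (q q' : Q) : h q q' ≠ 0 → deg q = deg q' + 1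
  deg_of_e_ne_zero (q q' : Q) : e q q' ≠ 0 → deg q = top ∧ deg q' = top
  δ_mul_δ : δ * δ = 0
  δ_mul_h_add_h_mul_δ : δ * h + h * δ = 1 - e

namespace LocalComplex

variable {R : Type*} [CommRing R] {ι Q : Type*} [Fintype ι] [Fintype Q] [DecidableEq Q]
  (L : LocalComplex R Q)

/-- The degree of a basis element of the tensor product of copies of `L`. -/
def totalDeg (b : ι → Q) : ℕ := ∑ c, L.deg (b c)

lemma totalDeg_update [DecidableEq ι] (b : ι → Q) (c : ι) (q : Q) :
    L.totalDeg (Function.update b c q) + L.deg (b c) = L.totalDeg b + L.deg q := by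
  rw [totalDeg, totalDeg, ← Finset.add_sum_erase _ _ (Finset.mem_univ c),
    ← Finset.add_sum_erase (a := c) _ (fun c' => L.deg (b c')) (Finset.mem_univ c),
    Finset.sum_congr rfl fun c' hc' => by rw [Function.update_of_ne (Finset.ne_of_mem_erase hc')],
    Function.update_self]
  ring

lemma totalDeg_le (b : ι → Q) : L.totalDeg b ≤ L.top * Fintype.card ι := by
  calc L.totalDeg b ≤ ∑ _ : ι, L.top := Finset.sum_le_sum fun c _ => L.deg_le (b c)
    _ = L.top * Fintype.card ι := by simp [mul_comm]

/-- The chains of degree `i` of the tensor product of copies of `L`, with coefficients in `S`. -/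
def chains (S : Type*) [AddCommGroup S] [Module R S] (i : ℕ) : Submodule R ((ι → Q) → S) where
  carrier := {f | ∀ b, L.totalDeg b ≠ i → f b = 0}
  add_mem' hf hf' b hb := by simp [hf b hb, hf' b hb]
  zero_mem' _ _ := rfl
  smul_mem' a f hf b hb := by simp [hf b hb]

variable [DecidableEq ι] {S : Type*} [AddCommGroup S] [Module R S] {γ : ι → S →ₗ[R] S}

variable {L} in
lemma localOp_mem_chains {i j : ℕ} {t : Matrix Q Q R}
    (ht : ∀ q q', t q q' ≠ 0 → L.deg q' + j = L.deg q + i) (c : ι) (γ : S →ₗ[R] S)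
    {f : (ι → Q) → S} (hf : f ∈ L.chains S i) : localOp c γ t f ∈ L.chains S j := by
  refine fun b hb => localOp_apply_eq_zero fun q hq => hf _ ?_
  have hdeg := ht _ _ hq
  have hupdate := L.totalDeg_update b c q
  omega

lemma localOp_h_mem_chains (c : ι) (γ : S →ₗ[R] S) {i : ℕ} {f : (ι → Q) → S}
    (hf : f ∈ L.chains S i) : localOp c γ L.h f ∈ L.chains S (i + 1) :=
  localOp_mem_chains (fun q q' hq => by rw [L.deg_of_h_ne_zero q q' hq]; ring) c γ hf

lemma localOp_e_mem_chains (c : ι) (γ : S →ₗ[R] S) {i : ℕ} {f : (ι → Q) → S}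
    (hf : f ∈ L.chains S i) : localOp c γ L.e f ∈ L.chains S i :=
  localOp_mem_chains
    (fun q q' hq => by rw [(L.deg_of_e_ne_zero q q' hq).1, (L.deg_of_e_ne_zero q q' hq).2]) c γ hf

/-- The differential of the tensor product of copies of `L`. -/
def diff (γ : ι → S →ₗ[R] S) : ((ι → Q) → S) →ₗ[R] ((ι → Q) → S) := ∑ c, localOp c (γ c) L.δ

lemma diff_apply (γ : ι → S →ₗ[R] S) (f : (ι → Q) → S) :
    L.diff γ f = ∑ c, localOp c (γ c) L.δ f := by
  simp [diff]

lemma diff_apply_apply (γ : ι → S →ₗ[R] S) (f : (ι → Q) → S) (b : ι → Q) :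
    L.diff γ f b = ∑ c, localOp c (γ c) L.δ f b := by
  simp [diff_apply]

lemma diff_apply_eq_zero {f : (ι → Q) → S} {b : ι → Q}
    (h : ∀ c q, L.δ (b c) q ≠ 0 → f (Function.update b c q) = 0) : L.diff γ f b = 0 := by
  rw [diff_apply_apply]
  exact Finset.sum_eq_zero fun c _ => localOp_apply_eq_zero (h c)

lemma totalDeg_update_of_δ_ne_zero {b : ι → Q} {c : ι} {q : Q} (hq : L.δ (b c) q ≠ 0) :
    L.totalDeg (Function.update b c q) = L.totalDeg b + 1 := by
  have hdeg := L.deg_of_δ_ne_zero _ _ hq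
  have hupdate := L.totalDeg_update b c q
  omega

lemma diff_mem_chains {i : ℕ} {f : (ι → Q) → S} (hf : f ∈ L.chains S (i + 1)) :
    L.diff γ f ∈ L.chains S i := fun _ hb =>
  L.diff_apply_eq_zero fun c q hq => hf _ (by rwa [L.totalDeg_update_of_δ_ne_zero hq, Ne,
    Nat.add_right_cancel_iff])

lemma diff_eq_zero_of_mem_chains_zero {f : (ι → Q) → S} (hf : f ∈ L.chains S 0) :
    L.diff γ f = 0 :=
  funext fun _ => L.diff_apply_eq_zero fun c q hq => hf _ (by
    rw [L.totalDeg_update_of_δ_ne_zero hq]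
    exact Nat.succ_ne_zero _)

end LocalComplex

namespace IsCliffordFamily

variable {R : Type*} [CommRing R] {ι Q S : Type*} [Fintype ι] [DecidableEq ι] [Fintype Q]
  [DecidableEq Q] [AddCommGroup S] [Module R S] {γ : ι → S →ₗ[R] S} (hγ : IsCliffordFamily γ)
  (L : LocalComplex R Q)

include hγ

lemma diff_diff (f : (ι → Q) → S) : L.diff γ (L.diff γ f) = 0 := by
  have hself c : localOp c (γ c) L.δ (localOp c (γ c) L.δ f) = 0 := by
    rw [localOp_localOp_self, L.δ_mul_δ, localOp_zero]
  simp only [L.diff_apply, map_sum]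
  rw [← Finset.sum_product']
  refine Finset.sum_involution (fun x _ => x.swap) ?_ ?_ (fun _ _ => Finset.mem_univ _)
    (fun _ _ => Prod.swap_swap _)
  · rintro ⟨c, c'⟩ -
    rcases eq_or_ne c c' with rfl | hc
    · simp [hself]
    · simp only [Prod.fst_swap, Prod.snd_swap]
      rw [localOp_anticomm hc.symm (hγ.anticomm hc.symm), add_neg_cancel]
  · rintro ⟨c, c'⟩ - hne heq
    obtain rfl : c' = c := congrArg Prod.fst heq
    exact hne (hself c')

/-- The homotopy of a single factor is a homotopy on the whole tensor product, because its cross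
terms with the differentials of the other factors cancel. -/
lemma diff_homotopy (c : ι) (f : (ι → Q) → S) :
    L.diff γ (localOp c (γ c) L.h f) + localOp c (γ c) L.h (L.diff γ f) =
      f - localOp c LinearMap.id L.e f := by
  have hsq : γ c ∘ₗ γ c = LinearMap.id := LinearMap.ext (hγ.apply_apply c)
  simp only [L.diff_apply, map_sum]
  rw [← Finset.sum_add_distrib, Fintype.sum_eq_single c]
  · rw [localOp_localOp_self, localOp_localOp_self, hsq, ← localOp_add, L.δ_mul_h_add_h_mul_δ,
      localOp_sub, localOp_one]
  · intro c' hc'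
    rw [localOp_anticomm hc' (hγ.anticomm hc'), neg_add_cancel]

lemma exists_eq_diff_add {i : ℕ} {f : (ι → Q) → S} (hf : f ∈ L.chains S i)
    (hdf : L.diff γ f = 0) (s : Finset ι) :
    ∃ y ∈ L.chains S (i + 1), ∃ x ∈ L.chains S i, L.diff γ x = 0 ∧ f = L.diff γ y + x ∧
      ∀ b, ∀ c ∈ s, L.deg (b c) ≠ L.top → x b = 0 := by
  induction s using Finset.induction_on with
  | empty => exact ⟨0, Submodule.zero_mem _, f, hf, hdf, by simp, by simp⟩
  | insert c s hc ih =>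
    obtain ⟨y, hy, x, hx, hdx, hfx, hxs⟩ := ih
    let y' := localOp c (γ c) L.h x
    let x' := localOp c LinearMap.id L.e x
    have hxx' : x = L.diff γ y' + x' := by
      rw [← sub_eq_iff_eq_add, ← hγ.diff_homotopy, hdx, map_zero, add_zero]
    refine ⟨y + y', Submodule.add_mem _ hy (L.localOp_h_mem_chains c _ hx), x',
      L.localOp_e_mem_chains c _ hx, ?_, ?_,
      fun b c' hc' hb => localOp_apply_eq_zero fun q hq => ?_⟩
    · rw [hxx', map_add, hγ.diff_diff, zero_add] at hdx
      exact hdx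
    · rw [map_add, add_assoc, ← hxx', hfx]
    · have hne : c' ≠ c := by
        rintro rfl
        exact hb (L.deg_of_e_ne_zero _ _ hq).1
      refine hxs _ c' ((Finset.mem_insert.1 hc').resolve_left hne) ?_
      rwa [Function.update_of_ne hne]

lemma exists_diff_eq {i : ℕ} (hi : i < L.top * Fintype.card ι) {f : (ι → Q) → S}
    (hf : f ∈ L.chains S i) (hdf : L.diff γ f = 0) : ∃ y ∈ L.chains S (i + 1), L.diff γ y = f := by
  obtain ⟨y, hy, x, hx, -, hfx, hxs⟩ := hγ.exists_eq_diff_add L hf hdf Finset.univ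
  have hx0 : x = 0 := by
    funext b
    by_cases hb : ∀ c, L.deg (b c) = L.top
    · exact hx b (by simpa [LocalComplex.totalDeg, hb, mul_comm] using hi.ne')
    · push Not at hb
      obtain ⟨c, hc⟩ := hb
      exact hxs b c (Finset.mem_univ c) hc
  exact ⟨y, hy, by rw [hfx, hx0, add_zero]⟩

lemma localOp_e_eq_self {f : (ι → Q) → S} (hf : f ∈ L.chains S (L.top * Fintype.card ι))
    (hdf : L.diff γ f = 0) (c : ι) : localOp c LinearMap.id L.e f = f := by
  have hf0 : localOp c (γ c) L.h f = 0 := funext fun b =>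
    L.localOp_h_mem_chains c (γ c) hf b (Nat.lt_succ_of_le (L.totalDeg_le b)).ne
  have hhom := hγ.diff_homotopy L c f
  rw [hdf, hf0, map_zero, map_zero, add_zero] at hhom
  exact (sub_eq_zero.1 hhom.symm).symm

end IsCliffordFamily

/-- The action of a group `A` on the basis of a complex `L` preserves the degree and the
differential, and the top cycles are invariant under `A`. -/
structure LocalComplex.IsInvariant {R Q : Type*} [CommRing R] [Fintype Q] [DecidableEq Q]
    (L : LocalComplex R Q) (A : Type*) [SMul A Q] : Prop where
  deg_smul (a : A) (q : Q) : L.deg (a • q) = L.deg q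
  δ_smul (a : A) (q q' : Q) : L.δ (a • q) (a • q') = L.δ q q'
  e_smul (a : A) (q q' : Q) : L.e (a • q) q' = L.e q q'

lemma IsCliffordFamily.apply_smul_eq_of_diff_eq_zero {R : Type*} [CommRing R] {ι Q S A : Type*}
    [Fintype ι] [DecidableEq ι] [Fintype Q] [DecidableEq Q] [AddCommGroup S] [Module R S]
    [SMul A Q] {γ : ι → S →ₗ[R] S} (hγ : IsCliffordFamily γ) {L : LocalComplex R Q}
    (hL : L.IsInvariant A) {f : (ι → Q) → S} (hf : f ∈ L.chains S (L.top * Fintype.card ι))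
    (hdf : L.diff γ f = 0) (a : A) (b : ι → Q) : f (a • b) = f b := by
  have hupdate b c : f (Function.update b c (a • b c)) = f b := by
    conv_lhs => rw [← hγ.localOp_e_eq_self L hf hdf c]
    conv_rhs => rw [← hγ.localOp_e_eq_self L hf hdf c]
    simp [localOp_apply, hL.e_smul]
  have hpiecewise (s : Finset ι) : f (s.piecewise (a • b) b) = f b := by
    induction s using Finset.induction_on with
    | empty => simp
    | insert c s hc ih =>
      rw [Finset.piecewise_insert, ← ih, ← hupdate (s.piecewise (a • b) b) c,
        Finset.piecewise_eq_of_notMem _ _ _ hc, Pi.smul_apply]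
  simpa using hpiecewise Finset.univ

/-- The cells of the augmented chain complex of a polygon with `p` edges. -/
inductive PolygonCell (p : ℕ)
  | empty
  | vertex (a : ZMod p)
  | edge (a : ZMod p)
deriving DecidableEq

namespace PolygonCell

section Cells

variable {p : ℕ}

/-- The set of cells as a disjoint union. -/
def equivOption (p : ℕ) : PolygonCell p ≃ Option (ZMod p ⊕ ZMod p) where
  toFun
    | empty => none
    | vertex a => some (.inl a)
    | edge a => some (.inr a)
  invFun
    | none => empty
    | some (.inl a) => vertex a
    | some (.inr a) => edge a
  left_inv q := by cases q <;> rfl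
  right_inv q := by rcases q with _ | _ | _ <;> rfl

instance [NeZero p] : Fintype (PolygonCell p) := Fintype.ofEquiv _ (equivOption p).symm

lemma sum_eq [NeZero p] {M : Type*} [AddCommMonoid M] (f : PolygonCell p → M) :
    ∑ q, f q = f empty + (∑ a, f (vertex a) + ∑ a, f (edge a)) := by
  rw [← (equivOption p).symm.sum_comp, Fintype.sum_option, Fintype.sum_sum_type]
  rfl

/-- The rotations of the polygon. -/
instance : MulAction (Multiplicative (ZMod p)) (PolygonCell p) where
  smul a
    | empty => empty
    | vertex b => vertex (a.toAdd + b)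
    | edge b => edge (a.toAdd + b)
  one_smul q := by
    cases q
    exacts [rfl, congrArg vertex (zero_add _), congrArg edge (zero_add _)]
  mul_smul a b q := by
    cases q
    exacts [rfl, congrArg vertex (add_assoc _ _ _), congrArg edge (add_assoc _ _ _)]

variable (a : Multiplicative (ZMod p))

@[simp] lemma smul_empty : a • (empty : PolygonCell p) = empty := rfl

@[simp] lemma smul_vertex (b : ZMod p) : a • vertex b = vertex (a.toAdd + b) := rfl

@[simp] lemma smul_edge (b : ZMod p) : a • edge b = edge (a.toAdd + b) := rfl

variable {a}

lemma smul_eq_empty_iff {q : PolygonCell p} : a • q = empty ↔ q = empty := by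
  cases q <;> simp

lemma eq_one_of_smul_eq_self {q : PolygonCell p} (hq : q ≠ empty) (h : a • q = q) : a = 1 := by
  cases q <;> simp_all

/-- The dimension of a cell plus one. -/
def deg : PolygonCell p → ℕ
  | empty => 0
  | vertex _ => 1
  | edge _ => 2

lemma deg_eq_zero {q : PolygonCell p} : q.deg = 0 ↔ q = empty := by cases q <;> simp [deg]

end Cells

section Matrices

variable (R : Type*) [CommRing R] (p : ℕ)

/-- The augmented boundary of the polygon. -/
def boundary : Matrix (PolygonCell p) (PolygonCell p) R
  | empty, vertex _ => 1
  | vertex a, edge b => (if a = b + 1 then 1 else 0) - if a = b then 1 else 0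
  | _, _ => 0

/-- The contraction of the polygon without the edge `-1` to the vertex `0`. -/
def homotopy : Matrix (PolygonCell p) (PolygonCell p) R
  | vertex a, empty => if a = 0 then 1 else 0
  | edge a, vertex b => if a.val < b.val then 1 else 0
  | _, _ => 0

/-- The projection onto the multiples of the sum of all edges that is given by the coefficient of
the edge `-1`. -/
def fundamental : Matrix (PolygonCell p) (PolygonCell p) R
  | edge _, edge b => if b = -1 then 1 else 0
  | _, _ => 0

lemma boundary_mul_boundary [NeZero p] : boundary R p * boundary R p = 0 := by
  ext q q'
  rw [Matrix.mul_apply, sum_eq]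
  cases q <;> cases q' <;> simp [boundary, Finset.sum_sub_distrib]

variable {p} [NeZero p]

lemma val_neg_one_add_one : (-1 : ZMod p).val + 1 = p := by
  obtain ⟨n, rfl⟩ := Nat.exists_eq_succ_of_ne_zero (NeZero.ne p)
  rw [ZMod.val_neg_one]

lemma val_sub_one_add_one {a : ZMod p} (ha : a ≠ 0) : (a - 1).val + 1 = a.val := by
  have hp : Fact (1 < p) := ⟨Nat.one_lt_iff_ne_zero_and_ne_one.2 ⟨NeZero.ne p, by
    rintro rfl
    exact ha (Subsingleton.elim _ _)⟩⟩
  have hpos : 0 < a.val := Nat.pos_of_ne_zero fun h => ha ((ZMod.val_eq_zero a).1 h)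
  rw [ZMod.val_sub (by rwa [ZMod.val_one p]), ZMod.val_one p, Nat.sub_add_cancel hpos]

lemma boundary_mul_homotopy_vertex (a b : ZMod p) :
    (∑ i, boundary R p (vertex a) (edge i) * homotopy R p (edge i) (vertex b)) +
      homotopy R p (vertex a) empty = if a = b then 1 else 0 := by
  have hadd i : a = i + 1 ↔ a - 1 = i := sub_eq_iff_eq_add.symm
  have hab : a = b ↔ a.val = b.val := (ZMod.val_injective p).eq_iff.symm
  simp only [boundary, homotopy, hadd, sub_mul, ite_mul, one_mul, zero_mul,
    Finset.sum_sub_distrib, Finset.sum_ite_eq, Finset.mem_univ, if_true]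
  have hb := b.val_lt
  rcases eq_or_ne a 0 with rfl | ha
  · have hneg := val_neg_one_add_one (p := p)
    simp only [hab, zero_sub, ZMod.val_zero]
    split_ifs <;> first | omega | simp
  · have hsub := val_sub_one_add_one ha
    simp only [hab, if_neg ha]
    split_ifs <;> first | omega | simp

lemma homotopy_mul_boundary_edge (a b : ZMod p) :
    ∑ i, homotopy R p (edge a) (vertex i) * boundary R p (vertex i) (edge b) =
      (if a = b then 1 else 0) - if b = -1 then 1 else 0 := by
  have hab : a = b ↔ a.val = b.val := (ZMod.val_injective p).eq_iff.symm
  simp only [boundary, homotopy, mul_sub, mul_ite, mul_one, mul_zero, Finset.sum_sub_distrib,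
    Finset.sum_ite_eq', Finset.mem_univ, if_true]
  have ha := a.val_lt
  rcases eq_or_ne b (-1) with rfl | hb
  · have hneg := val_neg_one_add_one (p := p)
    simp only [hab, neg_add_cancel, ZMod.val_zero, if_true]
    split_ifs <;> first | omega | simp
  · have hadd := val_sub_one_add_one fun h => hb (eq_neg_of_add_eq_zero_left h)
    rw [add_sub_cancel_right] at hadd
    simp only [hab, if_neg hb]
    split_ifs <;> first | omega | simp

lemma boundary_mul_homotopy_add_homotopy_mul_boundary :
    boundary R p * homotopy R p + homotopy R p * boundary R p = 1 - fundamental R p := by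
  ext q q'
  rw [Matrix.add_apply, Matrix.mul_apply, Matrix.mul_apply, sum_eq, sum_eq, Matrix.sub_apply,
    Matrix.one_apply]
  match q, q' with
  | vertex a, vertex b =>
    have h := boundary_mul_homotopy_vertex R a b
    simpa [boundary, homotopy, fundamental] using h
  | edge a, edge b =>
    have h := homotopy_mul_boundary_edge R a b
    simpa [boundary, homotopy, fundamental] using h
  | empty, empty | empty, vertex _ | empty, edge _ | vertex _, empty | vertex _, edge _
  | edge _, empty | edge _, vertex _ =>
    simp [boundary, homotopy, fundamental]

end Matrices

section Complex

variable (R : Type*) [CommRing R] (p : ℕ) [NeZero p]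

/-- The augmented cellular chain complex of the polygon. -/
def complex : LocalComplex R (PolygonCell p) where
  deg := deg
  top := 2
  δ := boundary R p
  h := homotopy R p
  e := fundamental R p
  deg_le q := by cases q <;> simp [deg]
  deg_of_δ_ne_zero q q' h := by cases q <;> cases q' <;> first | rfl | exact absurd rfl h
  deg_of_h_ne_zero q q' h := by cases q <;> cases q' <;> first | rfl | exact absurd rfl h
  deg_of_e_ne_zero q q' h := by
    cases q <;> cases q' <;> first | exact ⟨rfl, rfl⟩ | exact absurd rfl h
  δ_mul_δ := boundary_mul_boundary R p
  δ_mul_h_add_h_mul_δ := boundary_mul_homotopy_add_homotopy_mul_boundary R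

lemma isInvariant_complex : (complex R p).IsInvariant (Multiplicative (ZMod p)) where
  deg_smul a q := by cases q <;> rfl
  δ_smul a q q' := by cases q <;> cases q' <;> simp [complex, boundary, add_assoc]
  e_smul a q q' := by cases q <;> cases q' <;> rfl

variable {R p}

lemma totalDeg_complex_eq_zero {ι : Type*} [Fintype ι] {b : ι → PolygonCell p} :
    (complex R p).totalDeg b = 0 ↔ b = fun _ => empty := by
  simp [LocalComplex.totalDeg, complex, deg_eq_zero, funext_iff]

end Complex

end PolygonCell

section OrbitSums

variable (A : Type*) {G X : Type*} [Group A] [Group G] [MulAction A X] [MulAction G X]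
  [SMulCommClass G A X]

/-- The action of a group on the orbits of a commuting action of `A`. -/
instance orbitQuotientMulAction : MulAction G (MulAction.orbitRel.Quotient A X) where
  smul g := Quotient.map' (g • ·) fun _ y ⟨a, h⟩ =>
    ⟨a, (smul_comm g a y).symm.trans (congrArg (g • ·) h)⟩
  one_smul := Quotient.ind fun x => congrArg _ (one_smul G x)
  mul_smul g h := Quotient.ind fun x => congrArg _ (mul_smul g h x)

variable {A} in
lemma smul_mk_orbitRel (g : G) (x : X) :
    g • (⟦x⟧ : MulAction.orbitRel.Quotient A X) = ⟦g • x⟧ := rfl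

variable {R V : Type*} [CommSemiring R] [AddCommMonoid V] [Module R V] [Fintype A]

/-- Summation of the values of a function over the orbits of a commuting action of `A`, as a map
of representations. -/
def orbitSum (σ : Representation R G V) :
    IntertwiningMap (funRep X σ) (funRep (MulAction.orbitRel.Quotient A X) σ) where
  toFun f := Quotient.lift (fun x => ∑ a : A, f (a • x)) fun _ x ⟨b, h⟩ => by
    rw [← h, ← Equiv.sum_comp (Equiv.mulRight b) fun a => f (a • x)]
    simp [mul_smul]
  map_add' f f' := funext <| Quotient.ind fun x => Finset.sum_add_distrib
  map_smul' r f := funext <| Quotient.ind fun x => (Finset.smul_sum (r := r)).symm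
  isIntertwining' g := by
    ext1 f
    funext x
    induction x using Quotient.ind with | _ x
    obtain ⟨x, rfl⟩ := MulAction.surjective g x
    change ∑ a : A, funRep X σ g f (a • g • x) = σ g (∑ a : A, f (a • g⁻¹ • g • x))
    simp [← smul_comm g]

@[simp]
lemma orbitSum_mk (σ : Representation R G V) (f : X → V) (x : X) :
    orbitSum A σ f ⟦x⟧ = ∑ a : A, f (a • x) := rfl

open Classical in
lemma exists_orbitSum_eq (σ : Representation R G V)
    (Y : SubMulAction G (MulAction.orbitRel.Quotient A X))
    (hfree : ∀ (a : A) (x : X), ⟦x⟧ ∈ Y → a • x = x → a = 1) (f : Y → V) :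
    ∃ f' : X → V, ∀ y : Y, orbitSum A σ f' y = f y := by
  let f' (x : X) : V :=
    if h : (⟦x⟧ : MulAction.orbitRel.Quotient A X) ∈ Y then
      if Quotient.out (⟦x⟧ : MulAction.orbitRel.Quotient A X) = x then f ⟨_, h⟩ else 0
    else 0
  refine ⟨f', fun ⟨y, hy⟩ => ?_⟩
  obtain ⟨x, rfl, hx⟩ : ∃ x, ⟦x⟧ = y ∧ Quotient.out ⟦x⟧ = x :=
    ⟨y.out, Quotient.out_eq y, by rw [Quotient.out_eq y]⟩
  have hone (a : A) : x = a • x ↔ a = 1 :=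
    ⟨fun h => hfree a x hy h.symm, fun h => by rw [h, one_smul]⟩
  simp [f', hy, hx, hone]

end OrbitSums

/-- The action of `G` on the configurations `ι → Q` permutes the coordinates and twists them by
the elements `κ g c` of the group `A`. -/
class IsTwistedAction (G A ι Q : Type*) [Group G] [CommGroup A] [MulAction G ι] [MulAction A Q]
    [MulAction G (ι → Q)] (κ : outParam (G → ι → A)) : Prop where
  smul_apply_smul (g : G) (b : ι → Q) (c : ι) : (g • b) (g • c) = κ g c • b c

section TwistedActions

variable {G A ι Q : Type*} [Group G] [CommGroup A] [MulAction G ι] [MulAction A Q]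

/-- The twisted action on configurations that is given by a cocycle `κ`. -/
@[reducible]
def twistedAction (Q : Type*) [MulAction A Q] (κ : G → ι → A) (hone : ∀ c, κ 1 c = 1)
    (hmul : ∀ g h c, κ (g * h) c = κ g (h • c) * κ h c) : MulAction G (ι → Q) where
  smul g b c := κ g (g⁻¹ • c) • b (g⁻¹ • c)
  one_smul b := funext fun c => show κ 1 ((1 : G)⁻¹ • c) • b ((1 : G)⁻¹ • c) = b c by simp [hone]
  mul_smul g h b := funext fun c =>
    show κ (g * h) ((g * h)⁻¹ • c) • b ((g * h)⁻¹ • c) =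
      κ g (g⁻¹ • c) • κ h (h⁻¹ • g⁻¹ • c) • b (h⁻¹ • g⁻¹ • c) by
    simp [hmul, mul_smul]

namespace IsTwistedAction

variable [MulAction G (ι → Q)] {κ : G → ι → A} [IsTwistedAction G A ι Q κ]

instance : SMulCommClass G A (ι → Q) where
  smul_comm g a b := by
    funext c
    obtain ⟨c, rfl⟩ := MulAction.surjective g c
    simp [smul_apply_smul (A := A), smul_smul, mul_comm]

variable (A) in
lemma smul_update [DecidableEq ι] (g : G) (b : ι → Q) (c : ι) (q : Q) :
    g • Function.update b c q = Function.update (g • b) (g • c) (κ g c • q) := by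
  funext c'
  obtain ⟨c', rfl⟩ := MulAction.surjective g c'
  rcases eq_or_ne c' c with rfl | hc
  · simp [smul_apply_smul (A := A)]
  · simp [smul_apply_smul (A := A), hc]

/-- If `G` moves a configuration only within its `A`-orbit, then the translations describe a
homomorphism, which computes the twist at the coordinates where `A` acts freely. -/
lemma exists_monoidHom {b : ι → Q} (hb : ∀ g : G, ∃ a : A, g • b = a • b) {c : ι}
    (hfree : ∀ a : A, a • b c = b c → a = 1) :
    ∃ ψ : G →* A, ∀ g, g • c = c → ψ g = κ g c := by
  have hcancel {a a' : A} (h : a • b c = a' • b c) : a = a' :=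
    inv_mul_eq_one.1 (hfree _ (by rw [mul_smul, h, inv_smul_smul])) |>.symm
  choose ψ hψ using hb
  refine ⟨MonoidHom.mk' ψ fun g h => hcancel ?_, fun g hg => hcancel ?_⟩
  · have hgh : (g * h) • b = (ψ g * ψ h) • b := by
      rw [mul_smul, hψ h, smul_comm, hψ g, smul_smul, mul_comm]
    exact congrFun ((hψ (g * h)).symm.trans hgh) c
  · have hgb := smul_apply_smul (A := A) g b c
    rwa [hg, hψ g] at hgb

end IsTwistedAction

namespace LocalComplex

variable {R : Type*} [CommRing R] [Fintype ι] [Fintype Q] [DecidableEq Q] {L : LocalComplex R Q}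
  (hL : L.IsInvariant A)

section

variable [DecidableEq ι] {S : Type*} [AddCommGroup S] [Module R S]

include hL in
lemma diff_apply_smul (γ : ι → S →ₗ[R] S) (f : (ι → Q) → S) (a : A) (b : ι → Q) :
    L.diff γ f (a • b) = L.diff γ (fun b => f (a • b)) b := by
  have hupdate c q : a • Function.update b c q = Function.update (a • b) c (a • q) :=
    funext (Function.apply_update (fun _ => (a • ·)) b c q)
  simp only [L.diff_apply_apply, localOp_apply, hupdate]
  refine Finset.sum_congr rfl fun c _ => ?_
  rw [← Equiv.sum_comp (MulAction.toPerm a)]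
  simp [hL.δ_smul]

end

variable [MulAction G (ι → Q)] {κ : G → ι → A} [IsTwistedAction G A ι Q κ] {S : Type*}
  [AddCommGroup S] [Module R S] (σ : Representation R G S)

include hL κ in
lemma totalDeg_smul (g : G) (b : ι → Q) : L.totalDeg (g • b) = L.totalDeg b := by
  rw [totalDeg, ← Equiv.sum_comp (MulAction.toPerm g)]
  simp [totalDeg, IsTwistedAction.smul_apply_smul (A := A), hL.deg_smul]

/-- The chains of degree `i` as a subrepresentation. -/
def chainsSubrep (i : ℕ) : Subrepresentation (funRep (ι → Q) σ) where
  toSubmodule := L.chains S i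
  apply_mem_toSubmodule g f hf b hb := by
    rw [funRep_apply, hf _ (by rwa [totalDeg_smul hL]), map_zero]

/-- The differential as a map of representations. -/
def diffIntertwiningMap [DecidableEq ι] {γ : ι → S →ₗ[R] S}
    (hσγ : ∀ g c s, σ g (γ c s) = γ (g • c) (σ g s)) :
    IntertwiningMap (funRep (ι → Q) σ) (funRep (ι → Q) σ) where
  toLinearMap := L.diff γ
  isIntertwining' g := by
    refine LinearMap.ext fun f => funext fun b => ?_
    obtain ⟨b, rfl⟩ := MulAction.surjective g b
    simp only [LinearMap.comp_apply, funRep_apply_smul, L.diff_apply_apply, localOp_apply, map_sum]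
    rw [← Equiv.sum_comp (MulAction.toPerm g)]
    refine Finset.sum_congr rfl fun c _ => ?_
    rw [← Equiv.sum_comp (MulAction.toPerm (κ g c))]
    refine Finset.sum_congr rfl fun q _ => ?_
    rw [MulAction.toPerm_apply, MulAction.toPerm_apply, IsTwistedAction.smul_apply_smul (A := A),
      hL.δ_smul, ← IsTwistedAction.smul_update A, funRep_apply_smul, map_smul, hσγ]

end LocalComplex

end TwistedActions

section LensQuotient

open PolygonCell

variable {G : Type*} [Group G] {ι : Type*} [MulAction G ι] {p : ℕ} [MulAction G (ι → PolygonCell p)]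
  {κ : G → ι → Multiplicative (ZMod p)}

/-- The empty cell of the join of copies of the polygon. -/
def emptyCell (ι : Type*) (p : ℕ) : ι → PolygonCell p := fun _ => empty

lemma smul_eq_emptyCell_iff {a : Multiplicative (ZMod p)} {b : ι → PolygonCell p} :
    a • b = emptyCell ι p ↔ b = emptyCell ι p := by
  simp [funext_iff, emptyCell, smul_eq_empty_iff]

lemma mk_eq_mk_emptyCell_iff {b : ι → PolygonCell p} :
    (⟦b⟧ : MulAction.orbitRel.Quotient (Multiplicative (ZMod p)) (ι → PolygonCell p)) =
      ⟦emptyCell ι p⟧ ↔ b = emptyCell ι p := by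
  refine ⟨fun h => ?_, fun h => by rw [h]⟩
  obtain ⟨a, ha⟩ := Quotient.exact h
  rw [← ha]
  exact smul_eq_emptyCell_iff.2 rfl

lemma eq_one_of_smul_eq_self_of_ne_emptyCell {a : Multiplicative (ZMod p)} {b : ι → PolygonCell p}
    (hb : b ≠ emptyCell ι p) (h : a • b = b) : a = 1 := by
  obtain ⟨c, hc⟩ := Function.ne_iff.1 hb
  exact PolygonCell.eq_one_of_smul_eq_self hc (congrFun h c)

variable [IsTwistedAction G (Multiplicative (ZMod p)) ι (PolygonCell p) κ]

include κ in
lemma smul_emptyCell (g : G) : g • emptyCell ι p = emptyCell ι p := by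
  funext c
  obtain ⟨c, rfl⟩ := MulAction.surjective g c
  simp [IsTwistedAction.smul_apply_smul (A := Multiplicative (ZMod p)), emptyCell]

variable (G ι p) in
/-- The nonempty cells of the lens space, which is the quotient of the join of copies of the
polygon by the diagonal rotations. -/
def lensCells :
    SubMulAction G (MulAction.orbitRel.Quotient (Multiplicative (ZMod p)) (ι → PolygonCell p)) where
  carrier := {x | x ≠ ⟦emptyCell ι p⟧}
  smul_mem' g x hx h := hx <| by
    rw [← inv_smul_smul g x, h, smul_mk_orbitRel, smul_emptyCell]

lemma mk_mem_lensCells {b : ι → PolygonCell p} :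
    (⟦b⟧ : MulAction.orbitRel.Quotient (Multiplicative (ZMod p)) (ι → PolygonCell p)) ∈
      lensCells G ι p ↔ b ≠ emptyCell ι p :=
  mk_eq_mk_emptyCell_iff.not

/-- A fixed cell of the lens space produces a homomorphism to `ℤ/p` that extends the twist. -/
lemma stabilizer_lensCells_ne_top [MulAction.IsPretransitive G ι] {z : G} {c₀ : ι}
    (hz : z • c₀ = c₀) (hκz : κ z c₀ ≠ 1) (hker : ∀ ψ : G →* Multiplicative (ZMod p), ψ z = 1)
    (x : lensCells G ι p) : MulAction.stabilizer G x ≠ ⊤ := by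
  obtain ⟨x, hx⟩ := x
  induction x using Quotient.ind with | _ b
  intro htop
  have hb (g : G) : ∃ a : Multiplicative (ZMod p), g • b = a • b := by
    have hg : g ∈ MulAction.stabilizer G (⟨⟦b⟧, hx⟩ : lensCells G ι p) := htop ▸ Subgroup.mem_top g
    obtain ⟨a, ha⟩ := Quotient.exact (congrArg Subtype.val hg)
    exact ⟨a, ha.symm⟩
  obtain ⟨c, hc⟩ := Function.ne_iff.1 (mk_mem_lensCells.1 hx)
  have hc₀ : b c₀ ≠ empty := fun h => hc <| by
    obtain ⟨g, rfl⟩ := MulAction.exists_smul_eq G c₀ c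
    obtain ⟨a, ha⟩ := hb g
    have hgb := IsTwistedAction.smul_apply_smul (A := Multiplicative (ZMod p)) g b c₀
    rw [ha, h, smul_empty] at hgb
    exact smul_eq_empty_iff.1 hgb
  obtain ⟨ψ, hψ⟩ := IsTwistedAction.exists_monoidHom hb
    fun _ => PolygonCell.eq_one_of_smul_eq_self hc₀
  exact hκz (by rw [← hψ z hz, hker ψ])

variable [NeZero p] {R : Type*} [CommRing R] {S : Type*} [AddCommGroup S] [Module R S]

/-- The map induced on chains by the projection to the lens space. -/
def lensProjection (σ : Representation R G S) :
    IntertwiningMap (funRep (ι → PolygonCell p) σ) (funRep (lensCells G ι p) σ) :=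
  (funRepPullback σ (lensCells G ι p).subtype).comp (orbitSum (Multiplicative (ZMod p)) σ)

lemma lensProjection_surjective (σ : Representation R G S) :
    Function.Surjective (lensProjection (ι := ι) (p := p) σ) := fun f => by
  obtain ⟨f', hf'⟩ := exists_orbitSum_eq (Multiplicative (ZMod p)) σ (lensCells G ι p)
    (fun a b hb => eq_one_of_smul_eq_self_of_ne_emptyCell (mk_mem_lensCells.1 hb)) f
  exact ⟨f', funext hf'⟩

lemma lensProjection_eq_zero_iff {σ : Representation R G S} {f : (ι → PolygonCell p) → S} :
    lensProjection σ f = 0 ↔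
      ∀ b ≠ emptyCell ι p, ∑ a : Multiplicative (ZMod p), f (a • b) = 0 := by
  refine ⟨fun h b hb => congrFun h ⟨⟦b⟧, mk_mem_lensCells.2 hb⟩, fun h => funext fun x => ?_⟩
  obtain ⟨x, hx⟩ := x
  induction x using Quotient.ind with | _ b
  exact h b (mk_mem_lensCells.1 hx)

variable [Fintype ι] [DecidableEq ι] {σ : Representation R G S} {γ : ι → S →ₗ[R] S}

lemma lensProjection_diff_eq_zero {f : (ι → PolygonCell p) → S} (hf : lensProjection σ f = 0) :
    lensProjection σ ((complex R p).diff γ f) = 0 := by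
  rw [lensProjection_eq_zero_iff] at hf ⊢
  intro b _
  simp only [LocalComplex.diff_apply_smul (isInvariant_complex R p)]
  rw [← Finset.sum_apply, ← map_sum]
  refine (complex R p).diff_apply_eq_zero fun c q hq => ?_
  rw [Finset.sum_apply]
  refine hf _ fun h => ?_
  have hdeg := (complex R p).totalDeg_update_of_δ_ne_zero hq
  rw [totalDeg_complex_eq_zero.2 h] at hdeg
  exact Nat.succ_ne_zero _ hdeg.symm

lemma diff_apply_emptyCell_eq_zero {f : (ι → PolygonCell p) → S} (hf : lensProjection σ f = 0) :
    (complex R p).diff γ f (emptyCell ι p) = 0 := by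
  rw [LocalComplex.diff_apply_apply]
  refine Finset.sum_eq_zero fun c _ => ?_
  have hsmul (a : Multiplicative (ZMod p)) :
      a • Function.update (emptyCell ι p) c (vertex 0) =
        Function.update (emptyCell ι p) c (vertex a.toAdd) :=
    funext fun c' => by
      rcases eq_or_ne c' c with rfl | hc <;> simp [emptyCell, *]
  have hsum := lensProjection_eq_zero_iff.1 hf (Function.update (emptyCell ι p) c (vertex 0))
    fun h => by simpa [emptyCell] using congrFun h c
  simp only [hsmul] at hsum
  rw [← Equiv.sum_comp Multiplicative.ofAdd] at hsum
  rw [localOp_apply, sum_eq]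
  simpa [emptyCell, complex, boundary, ← map_sum] using congrArg (γ c) hsum

lemma lensProjection_eq_zero_of_diff_eq_zero [CharP R p] (hγ : IsCliffordFamily γ)
    {f : (ι → PolygonCell p) → S}
    (hf : f ∈ (complex R p).chains S ((complex R p).top * Fintype.card ι))
    (hdf : (complex R p).diff γ f = 0) : lensProjection σ f = 0 := by
  refine lensProjection_eq_zero_iff.2 fun b _ => ?_
  simp [hγ.apply_smul_eq_of_diff_eq_zero (isInvariant_complex R p) hf hdf,
    ← Nat.cast_smul_eq_nsmul R]

end LensQuotient

section LensResolution

open PolygonCell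

variable {ι : Type} [Fintype ι] [MulAction G ι] {p : ℕ} [NeZero p]
  [MulAction G (ι → PolygonCell p)] {κ : G → ι → Multiplicative (ZMod p)}
  [IsTwistedAction G (Multiplicative (ZMod p)) ι (PolygonCell p) κ]
  {S : Type} [AddCommGroup S] [Module k S]

/-- Evaluation of functions at the empty cell, as a map of representations. -/
def evalEmptyCell (σ : Representation k G S) :
    IntertwiningMap (funRep (ι → PolygonCell p) σ) σ where
  toLinearMap := LinearMap.proj (emptyCell ι p)
  isIntertwining' g := LinearMap.ext fun f => by
    conv_lhs => rw [LinearMap.comp_apply, ← smul_emptyCell g]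
    exact funRep_apply_smul σ g f _

lemma eq_zero_of_mem_chains_zero {f : (ι → PolygonCell p) → S}
    (hf : f ∈ (complex k p).chains S 0) (h0 : f (emptyCell ι p) = 0) : f = 0 := by
  funext b
  by_cases hb : b = emptyCell ι p
  · rw [hb, h0, Pi.zero_apply]
  · exact hf b fun h => hb (totalDeg_complex_eq_zero.1 h)

lemma single_emptyCell_mem_chains (s : S) :
    Pi.single (emptyCell ι p) s ∈ (complex k p).chains S 0 := fun b hb =>
  Pi.single_eq_of_ne (M := fun _ => S) (fun h : b = emptyCell ι p =>
    hb (totalDeg_complex_eq_zero.2 h)) s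

variable [DecidableEq ι] {γ : ι → S →ₗ[k] S}

/-- The augmented chain complex of the join of polygons is a resolution, and the projection to
the lens space multiplies the fundamental class of the join by `p`. -/
def lensResolution [Nonempty ι] [CharP k p] (σ : Representation k G S) (hγ : IsCliffordFamily γ)
    (hσγ : ∀ g c s, σ g (γ c s) = γ (g • c) (σ g s)) :
    SplittingResolution (funRep (ι → PolygonCell p) σ) (funRep (lensCells G ι p) σ) σ :=
  have hm : 1 < (complex k p).top * Fintype.card ι :=
    Nat.mul_le_mul_left 2 (Fintype.card_pos (α := ι))
  { d := LocalComplex.diffIntertwiningMap (isInvariant_complex k p) σ hσγ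
    ε := (evalEmptyCell σ).comp
      (LocalComplex.diffIntertwiningMap (isInvariant_complex k p) σ hσγ)
    chains := LocalComplex.chainsSubrep (isInvariant_complex k p) σ
    m := (complex k p).top * Fintype.card ι
    one_lt_m := hm
    d_d := hγ.diff_diff _
    ε_d := fun f => congrFun (hγ.diff_diff _ f) _
    exists_ε_eq := fun s => by
      obtain ⟨f, hf, hdf⟩ := hγ.exists_diff_eq _ (Nat.zero_lt_one.trans hm)
        (single_emptyCell_mem_chains s)
        (LocalComplex.diff_eq_zero_of_mem_chains_zero _ (single_emptyCell_mem_chains s))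
      exact ⟨f, hf, (congrFun hdf _).trans (Pi.single_eq_same (M := fun _ => S) _ s)⟩
    exists_d_eq_of_ε_eq_zero := fun f hf hεf =>
      hγ.exists_diff_eq _ hm hf
        (eq_zero_of_mem_chains_zero (LocalComplex.diff_mem_chains _ hf) hεf)
    exists_d_eq := fun i _ hi f hf hdf => hγ.exists_diff_eq _ hi hf hdf
    q := lensProjection σ
    q_surjective := lensProjection_surjective σ
    q_d_eq_zero := fun _ => lensProjection_diff_eq_zero
    ε_eq_zero := fun _ => diff_apply_emptyCell_eq_zero
    q_eq_zero := fun _ => lensProjection_eq_zero_of_diff_eq_zero hγ }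

omit [Fintype ι] [DecidableEq ι] in
theorem BuiltFrom.ne_top_of_isCliffordFamily [Finite ι] [Finite G] [MulAction.IsPretransitive G ι]
    [FiniteDimensional k S] [CharP k p] {z : G} {c₀ : ι} (hz : z • c₀ = c₀) (hκz : κ z c₀ ≠ 1)
    (hker : ∀ ψ : G →* Multiplicative (ZMod p), ψ z = 1) {σ : Representation k G S}
    (hγ : IsCliffordFamily γ) (hσγ : ∀ g c s, σ g (γ c s) = γ (g • c) (σ g s)) :
    BuiltFrom (· ≠ ⊤) σ := by
  classical
  have := Fintype.ofFinite ι
  have : Nonempty ι := ⟨c₀⟩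
  exact .of_resolution (lensResolution σ hγ hσγ)
    (.funRep _ (stabilizer_lensCells_ne_top hz hκz hker) σ)

end LensResolution

section CliffordOperators

variable {R : Type*} [CommRing R]

lemma contractLeft_exteriorAlgebraMap {M N : Type*} [AddCommGroup M] [Module R M]
    [AddCommGroup N] [Module R N] (f : M →ₗ[R] N) (d : Module.Dual R N)
    (x : ExteriorAlgebra R M) :
    CliffordAlgebra.contractLeft d (ExteriorAlgebra.map f x) =
      ExteriorAlgebra.map f (CliffordAlgebra.contractLeft (d ∘ₗ f) x) := by
  have hmul m y : ExteriorAlgebra.map f (CliffordAlgebra.ι 0 m * y) =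
      CliffordAlgebra.ι 0 (f m) * ExteriorAlgebra.map f y :=
    (map_mul (ExteriorAlgebra.map f) _ _).trans
      (congrArg (· * _) (ExteriorAlgebra.map_apply_ι f m))
  induction x using CliffordAlgebra.left_induction with
  | algebraMap r => simp [CliffordAlgebra.contractLeft_algebraMap]
  | add x y hx hy => simp [hx, hy]
  | ι_mul x m hx =>
    rw [hmul, CliffordAlgebra.contractLeft_ι_mul, CliffordAlgebra.contractLeft_ι_mul, map_sub,
      hmul, hx, map_smul, LinearMap.comp_apply]

lemma algebraMapInv_exteriorAlgebraMap {M N : Type*} [AddCommGroup M] [Module R M]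
    [AddCommGroup N] [Module R N] (f : M →ₗ[R] N) (x : ExteriorAlgebra R M) :
    ExteriorAlgebra.algebraMapInv (ExteriorAlgebra.map f x) = ExteriorAlgebra.algebraMapInv x := by
  have hcomp : (ExteriorAlgebra.algebraMapInv : ExteriorAlgebra R N →ₐ[R] R).comp
      (ExteriorAlgebra.map f) = ExteriorAlgebra.algebraMapInv := by
    ext m
    simp [ExteriorAlgebra.algebraMapInv]
  exact DFunLike.congr_fun hcomp x

lemma IsCliffordFamily.rTensor {ι S : Type*} [AddCommGroup S] [Module R S] {γ : ι → S →ₗ[R] S}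
    (hγ : IsCliffordFamily γ) (V : Type*) [AddCommGroup V] [Module R V] :
    IsCliffordFamily fun c => (γ c).rTensor V where
  anticomm {c c'} hc s := by
    induction s using TensorProduct.induction_on with
    | zero => simp
    | tmul x v => simp [hγ.anticomm hc, TensorProduct.neg_tmul]
    | add s t hs ht => simp only [map_add, hs, ht, neg_add]
  apply_apply c s := by
    induction s using TensorProduct.induction_on with
    | zero => simp
    | tmul x v => simp [hγ.apply_apply]
    | add s t hs ht => simp only [map_add, hs, ht]

variable {ι : Type*} [DecidableEq ι]

variable (R) in
/-- The Clifford multiplication by a standard basis vector on the exterior algebra. -/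
noncomputable def cliffordOp (c : ι) :
    ExteriorAlgebra R (ι → R) →ₗ[R] ExteriorAlgebra R (ι → R) :=
  LinearMap.mulLeft R (ExteriorAlgebra.ι R (Pi.single c 1)) +
    CliffordAlgebra.contractLeft (LinearMap.proj c)

lemma cliffordOp_apply (c : ι) (x : ExteriorAlgebra R (ι → R)) :
    cliffordOp R c x = ExteriorAlgebra.ι R (Pi.single c 1) * x +
      CliffordAlgebra.contractLeft (LinearMap.proj c) x := rfl

lemma contractLeft_proj_ι_mul (c c' : ι) (x : ExteriorAlgebra R (ι → R)) :
    CliffordAlgebra.contractLeft (LinearMap.proj c) (ExteriorAlgebra.ι R (Pi.single c' 1) * x) =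
      (if c = c' then x else 0) -
        ExteriorAlgebra.ι R (Pi.single c' 1) *
          CliffordAlgebra.contractLeft (LinearMap.proj c) x := by
  refine (CliffordAlgebra.contractLeft_ι_mul (Q := (0 : QuadraticForm R (ι → R)))
    (d := LinearMap.proj c) (Pi.single c' 1) x).trans ?_
  rw [LinearMap.proj_apply, Pi.single_apply, ite_smul, one_smul, zero_smul]

lemma isCliffordFamily_cliffordOp : IsCliffordFamily (cliffordOp R (ι := ι)) where
  apply_apply c x := by
    simp only [cliffordOp_apply, map_add, contractLeft_proj_ι_mul, ← mul_assoc,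
      ExteriorAlgebra.ι_sq_zero, zero_mul, CliffordAlgebra.contractLeft_contractLeft, if_true]
    abel
  anticomm {c c'} hc x := by
    have hι : ExteriorAlgebra.ι R (Pi.single c 1 : ι → R) *
          ExteriorAlgebra.ι R (Pi.single c' 1 : ι → R) =
        -(ExteriorAlgebra.ι R (Pi.single c' 1 : ι → R) *
          ExteriorAlgebra.ι R (Pi.single c 1 : ι → R)) :=
      eq_neg_of_add_eq_zero_left (ExteriorAlgebra.ι_add_mul_swap _ _)
    have hcontract : CliffordAlgebra.contractLeft (LinearMap.proj c)
          (CliffordAlgebra.contractLeft (LinearMap.proj c') x) =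
        -CliffordAlgebra.contractLeft (LinearMap.proj c')
          (CliffordAlgebra.contractLeft (LinearMap.proj c) x) :=
      CliffordAlgebra.contractLeft_comm _ _ x
    have habel (s t u v : ExteriorAlgebra R (ι → R)) :
        -s + (0 - u) + (t + -v) = -(s + (0 - t) + (u + v)) := by
      abel
    simp only [cliffordOp_apply, map_add, contractLeft_proj_ι_mul, if_neg hc, if_neg hc.symm,
      hcontract, ← mul_assoc, hι, neg_mul]
    exact habel _ _ _ _

end CliffordOperators

section ExteriorRepresentation

variable {R : Type*} [CommRing R] {G : Type*} [Group G] {ι : Type*} [MulAction G ι]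

variable (R ι) in
/-- The exterior algebra of the permutation representation on the functions on `ι`. -/
noncomputable def exteriorRep : Representation R G (ExteriorAlgebra R (ι → R)) where
  toFun g := (ExteriorAlgebra.map (funRep ι (1 : Representation R G R) g)).toLinearMap
  map_one' := by
    rw [map_one]
    exact congrArg AlgHom.toLinearMap ExteriorAlgebra.map_id
  map_mul' g h := by
    rw [map_mul]
    exact congrArg AlgHom.toLinearMap (ExteriorAlgebra.map_comp_map _ _).symm

lemma exteriorRep_apply (g : G) (x : ExteriorAlgebra R (ι → R)) :
    exteriorRep R ι g x = ExteriorAlgebra.map (funRep ι (1 : Representation R G R) g) x := rfl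

lemma exteriorRep_cliffordOp [DecidableEq ι] (g : G) (c : ι) (x : ExteriorAlgebra R (ι → R)) :
    exteriorRep R ι g (cliffordOp R c x) = cliffordOp R (g • c) (exteriorRep R ι g x) := by
  have hproj : LinearMap.proj (g • c) ∘ₗ funRep ι (1 : Representation R G R) g =
      (LinearMap.proj c : (ι → R) →ₗ[R] R) :=
    LinearMap.ext fun w => funRep_apply_smul (1 : Representation R G R) g w c
  simp only [exteriorRep_apply, cliffordOp_apply, map_add, map_mul, ExteriorAlgebra.map_apply_ι,
    funRep_single, MonoidHom.one_apply, Module.End.one_apply, contractLeft_exteriorAlgebraMap,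
    hproj]

lemma finite_exteriorAlgebra [Finite ι] : Module.Finite R (ExteriorAlgebra R (ι → R)) := by
  have := Fintype.ofFinite ι
  classical
  let : LinearOrder ι := linearOrderOfSTO WellOrderingRel
  exact Module.Finite.of_basis (Pi.basisFun R ι).ExteriorAlgebra

variable {V : Type*} [AddCommGroup V] [Module R V] (τ : Representation R G V)

variable (ι) in
/-- The inclusion of `τ` into its tensor product with the exterior algebra. -/
noncomputable def exteriorInclusion : IntertwiningMap τ ((exteriorRep R ι).tprod τ) where
  toLinearMap := TensorProduct.mk R _ V 1
  isIntertwining' g := LinearMap.ext fun v => by simp [exteriorRep_apply]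

variable (ι) in
/-- The projection onto the degree zero part of the exterior algebra, tensored with `τ`. -/
noncomputable def exteriorProjection : IntertwiningMap ((exteriorRep R ι).tprod τ) τ where
  toLinearMap := (TensorProduct.lid R V).toLinearMap ∘ₗ
    ExteriorAlgebra.algebraMapInv.toLinearMap.rTensor V
  isIntertwining' g := TensorProduct.ext' fun x v => by
    simp [exteriorRep_apply, algebraMapInv_exteriorAlgebraMap]

lemma exteriorProjection_exteriorInclusion (v : V) :
    exteriorProjection ι τ (exteriorInclusion ι τ v) = v := by
  change TensorProduct.lid R V (ExteriorAlgebra.algebraMapInv.toLinearMap.rTensor V (1 ⊗ₜ v)) = v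
  simp

end ExteriorRepresentation

theorem BuiltFrom.ne_top_of_cocycle [Finite G] {V : Type} [AddCommGroup V] [Module k V]
    [FiniteDimensional k V] {ι : Type} [Finite ι] [MulAction G ι] [MulAction.IsPretransitive G ι]
    {p : ℕ} [NeZero p] [CharP k p] {κ : G → ι → Multiplicative (ZMod p)} (hone : ∀ c, κ 1 c = 1)
    (hmul : ∀ g h c, κ (g * h) c = κ g (h • c) * κ h c) {z : G} {c₀ : ι} (hz : z • c₀ = c₀)
    (hκz : κ z c₀ ≠ 1) (hker : ∀ ψ : G →* Multiplicative (ZMod p), ψ z = 1)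
    (τ : Representation k G V) : BuiltFrom (· ≠ ⊤) τ := by
  classical
  let := twistedAction (PolygonCell p) κ hone hmul
  have : IsTwistedAction G (Multiplicative (ZMod p)) ι (PolygonCell p) κ :=
    ⟨fun g b c => by
      change κ g (g⁻¹ • g • c) • b (g⁻¹ • g • c) = _
      rw [inv_smul_smul]⟩
  have := finite_exteriorAlgebra (R := k) (ι := ι)
  refine retract (exteriorInclusion ι τ) (exteriorProjection ι τ)
    (exteriorProjection_exteriorInclusion τ)
    (.ne_top_of_isCliffordFamily hz hκz hker (isCliffordFamily_cliffordOp.rTensor V) ?_)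
  intro g c s
  induction s using TensorProduct.induction_on with
  | zero => simp
  | tmul x v => simp [exteriorRep_cliffordOp]
  | add s t hs ht => simp only [map_add, hs, ht]

section ElementaryAbelian

variable {p : ℕ}

lemma IsElementaryAbelian.map {H : Type} [Group H] {K : Subgroup H}
    (hK : IsElementaryAbelian p K) (f : H →* G) : IsElementaryAbelian p (K.map f) := by
  refine ⟨?_, ?_⟩
  · rintro _ ⟨x, hx, rfl⟩
    rw [← map_pow, hK.1 x hx, map_one]
  · rintro _ ⟨x, hx, rfl⟩ _ ⟨y, hy, rfl⟩
    rw [← map_mul, hK.2 x hx y hy, map_mul]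

lemma exists_ne_one_of_not_isElementaryAbelian_top
    (h : ¬ IsElementaryAbelian p (⊤ : Subgroup G)) :
    ∃ w : G, w ≠ 1 ∧ ∀ ψ : G →* Multiplicative (ZMod p), ψ w = 1 := by
  by_contra! hw
  refine h ⟨fun x _ => ?_, fun x _ y _ => ?_⟩
  · by_contra hx
    obtain ⟨ψ, hψ⟩ := hw _ hx
    refine hψ (Multiplicative.toAdd.injective ?_)
    simp [toAdd_pow]
  · by_contra hxy
    obtain ⟨ψ, hψ⟩ := hw (x * y * (y * x)⁻¹) (mt mul_inv_eq_one.mp hxy)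
    refine hψ ?_
    rw [map_mul, map_inv, map_mul, map_mul, mul_comm (ψ y), mul_inv_cancel]

variable [Fact p.Prime]

lemma exists_orderOf_pow_eq_prime {G : Type*} [Group G] (hG : IsPGroup p G) {w : G}
    (hw : w ≠ 1) : ∃ n : ℕ, orderOf (w ^ n) = p := by
  obtain ⟨m, hm⟩ := IsPGroup.iff_orderOf.1 hG w
  refine ⟨_, orderOf_pow_orderOf_div (hm ▸ pow_ne_zero m (NeZero.ne p)) ?_⟩
  rw [hm]
  refine dvd_pow_self p fun h0 => hw ?_
  rwa [h0, pow_zero, orderOf_eq_one_iff] at hm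

lemma exists_cocycle_zpowers {G : Type*} [Group G] {z : G} (hz : orderOf z = p) :
    ∃ κ : G → G ⧸ Subgroup.zpowers z → Multiplicative (ZMod p),
      (∀ c, κ 1 c = 1) ∧ (∀ g h c, κ (g * h) c = κ g (h • c) * κ h c) ∧
        ∃ c, z • c = c ∧ κ z c ≠ 1 := by
  let e : Subgroup.zpowers z ≃* Multiplicative (ZMod p) :=
    mulEquivOfCyclicCardEq (by
      rw [Nat.card_zpowers, hz, Nat.card_congr Multiplicative.toAdd, Nat.card_zmod])
  have hfix : z • ((1 : G) : G ⧸ Subgroup.zpowers z) = (1 : G) := by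
    rw [MulAction.Quotient.smul_coe, QuotientGroup.eq]
    simp
  refine ⟨fun g c => e (cosetCocycle _ g c), fun c => by simp [cosetCocycle_one],
    fun g h c => by simp [cosetCocycle_mul], (1 : G), hfix, ?_⟩
  rw [ne_eq, EmbeddingLike.map_eq_one_iff, Subtype.ext_iff, coe_cosetCocycle, hfix,
    Subgroup.coe_one, inv_mul_eq_one, right_eq_mul, ← orderOf_eq_one_iff, hz]
  exact (Fact.out : p.Prime).ne_one

variable [Finite G] [CharP k p] {V : Type} [AddCommGroup V] [Module k V]
  [FiniteDimensional k V]

namespace BuiltFrom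

theorem ne_top_of_isPGroup (hG : IsPGroup p G)
    (h : ¬ IsElementaryAbelian p (⊤ : Subgroup G)) (τ : Representation k G V) :
    BuiltFrom (· ≠ ⊤) τ := by
  obtain ⟨w, hw1, hw⟩ := exists_ne_one_of_not_isElementaryAbelian_top h
  obtain ⟨n, hn⟩ := exists_orderOf_pow_eq_prime hG hw1
  obtain ⟨κ, hone, hmul, c, hz, hκz⟩ := exists_cocycle_zpowers hn
  exact ne_top_of_cocycle hone hmul hz hκz (fun ψ => by rw [map_pow, hw, one_pow]) τ

theorem isElementaryAbelian_of_isPGroup (hG : IsPGroup p G) (τ : Representation k G V) :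
    BuiltFrom (IsElementaryAbelian p) τ := by
  induction hn : Nat.card G using Nat.strong_induction_on generalizing G V with
  | _ n ih =>
    by_cases h : IsElementaryAbelian p (⊤ : Subgroup G)
    · exact of_index_ne_zero (H := ⊤) (by simp)
        ((coset ⊤ h τ).of_equiv (funRepEquivIndRep ⊤ τ).symm)
    · refine (ne_top_of_isPGroup hG h τ).trans fun E hE W _ _ _ σ => ?_
      refine (ih _ ?_ (hG.to_subgroup E) σ rfl).indRep fun K hK => hK.map E.subtype
      rw [← hn]
      exact lt_of_le_of_ne (Subgroup.card_le_card_group E)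
        fun hc => hE (Subgroup.eq_top_of_card_eq E hc)

theorem isElementaryAbelian (p : ℕ) [Fact p.Prime] [CharP k p] (τ : Representation k G V) :
    BuiltFrom (IsElementaryAbelian p) τ := by
  let P : Sylow p G := default
  refine of_index_ne_zero (H := (P : Subgroup G)) ?_
    ((isElementaryAbelian_of_isPGroup P.isPGroup' _).indRep fun K hK => hK.map _)
  rw [ne_eq, CharP.cast_eq_zero_iff k p]
  exact P.not_dvd_index

end BuiltFrom

end ElementaryAbelian

section InducedFrom

variable {V : Type} [AddCommGroup V] [Module k V] (ρ : Representation k G V)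

lemma map_funRep_range_single {X : Type*} [MulAction G X] [DecidableEq X] (g : G) (x : X) :
    (LinearMap.range (LinearMap.single k (fun _ => V) x)).map (funRep X ρ g) =
      LinearMap.range (LinearMap.single k (fun _ => V) (g • x)) := by
  have hcomp : funRep X ρ g ∘ₗ LinearMap.single k (fun _ => V) x =
      LinearMap.single k (fun _ => V) (g • x) ∘ₗ ρ g :=
    LinearMap.ext fun v => funRep_single ρ g x v
  rw [← LinearMap.range_comp, hcomp, LinearMap.range_comp_of_range_eq_top]
  exact LinearMap.range_eq_top.2 fun v => ⟨ρ g⁻¹ v, self_inv_apply ρ g v⟩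

lemma isInducedFrom_funRep (E : Subgroup G) [Finite (G ⧸ E)] :
    IsInducedFrom (funRep (G ⧸ E) ρ) E := by
  classical
  have hout (c : G ⧸ E) :
      (LinearMap.range (LinearMap.single k (fun _ => V) ((1 : G) : G ⧸ E))).map
        (funRep (G ⧸ E) ρ c.out) = LinearMap.range (LinearMap.single k (fun _ => V) c) := by
    rw [map_funRep_range_single, MulAction.Quotient.smul_coe, smul_eq_mul, mul_one,
      QuotientGroup.out_eq']
  refine ⟨LinearMap.range (LinearMap.single k (fun _ => V) ((1 : G) : G ⧸ E)), fun e he => ?_,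
    ?_, ?_⟩
  · have hfix : e • ((1 : G) : G ⧸ E) = (1 : G) := by
      rw [MulAction.Quotient.smul_coe, QuotientGroup.eq]
      simpa using he
    rw [map_funRep_range_single, hfix]
  · simp only [hout]
    intro c
    simpa using LinearMap.disjoint_single_single k (fun _ : G ⧸ E => V) {c} {c}ᶜ
      disjoint_compl_right
  · simp only [hout]
    exact LinearMap.iSup_range_single k fun _ => V

end InducedFrom

section Filtration

variable {U V W : Type} [AddCommGroup U] [Module k U] [AddCommGroup V] [Module k V]
  [AddCommGroup W] [Module k W]
  {τ : Representation k G U} {ρ : Representation k G V} {σ : Representation k G W}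

/-- The image of a subrepresentation. -/
def mapSubrep (f : IntertwiningMap τ ρ) (A : Subrepresentation τ) : Subrepresentation ρ where
  toSubmodule := A.toSubmodule.map f.toLinearMap
  apply_mem_toSubmodule g := by
    rintro _ ⟨u, hu, rfl⟩
    exact ⟨τ g u, A.apply_mem_toSubmodule g hu, f.isIntertwining _ _ g u⟩

/-- The preimage of a subrepresentation. -/
def comapSubrep (f : IntertwiningMap τ ρ) (A : Subrepresentation ρ) : Subrepresentation τ where
  toSubmodule := A.toSubmodule.comap f.toLinearMap
  apply_mem_toSubmodule g u hu := by
    change f (τ g u) ∈ A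
    rw [f.isIntertwining]
    exact A.apply_mem_toSubmodule g hu

/-- The subquotient `B / A` of the representation `ρ` is a finite-dimensional representation
induced from a subgroup satisfying `S`. -/
def IsInducedStep (S : Subgroup G → Prop) (ρ : Representation k G V)
    (A B : Subrepresentation ρ) : Prop :=
  A ≤ B ∧ ∃ E : Subgroup G, S E ∧ ∃ Q : Rep k G, FiniteDimensional k Q.V ∧ IsInducedFrom Q.ρ E ∧
    ∃ φ : IntertwiningMap B.toRepresentation Q.ρ,
      Function.Surjective φ ∧ ∀ b, φ b = 0 ↔ (b : V) ∈ A

variable {S : Subgroup G → Prop}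

lemma IsInducedStep.of_surjective {A B : Subrepresentation τ} {A' B' : Subrepresentation ρ}
    (h : IsInducedStep S τ A B) (hle : A' ≤ B')
    (π : IntertwiningMap B'.toRepresentation B.toRepresentation) (hπ : Function.Surjective π)
    (hmem : ∀ b, (π b : U) ∈ A ↔ (b : V) ∈ A') : IsInducedStep S ρ A' B' := by
  obtain ⟨-, E, hE, Q, hQ, hQE, φ, hφ, hker⟩ := h
  exact ⟨hle, E, hE, Q, hQ, hQE, φ.comp π, hφ.comp hπ, fun b => (hker (π b)).trans (hmem b)⟩

lemma IsInducedStep.comap {A B : Subrepresentation σ} (h : IsInducedStep S σ A B)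
    {f : IntertwiningMap ρ σ} (hf : Function.Surjective f) :
    IsInducedStep S ρ (comapSubrep f A) (comapSubrep f B) := by
  refine h.of_surjective (fun v hv => h.1 hv)
    { toLinearMap := f.toLinearMap.restrict fun _ hv => hv
      isIntertwining' := fun g => LinearMap.ext fun v => Subtype.ext (f.isIntertwining _ _ g v) }
    ?_ fun _ => Iff.rfl
  rintro ⟨w, hw⟩
  obtain ⟨v, rfl⟩ := hf w
  exact ⟨⟨v, hw⟩, rfl⟩

lemma IsInducedStep.map {A B : Subrepresentation τ} (h : IsInducedStep S τ A B)
    {f : IntertwiningMap τ ρ} (hf : Function.Injective f) :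
    IsInducedStep S ρ (mapSubrep f A) (mapSubrep f B) := by
  let e := B.toSubmodule.equivMapOfInjective f.toLinearMap hf
  refine h.of_surjective (Submodule.map_mono h.1)
    { toLinearMap := e.symm.toLinearMap
      isIntertwining' := fun g => LinearMap.ext fun v => ?_ } e.symm.surjective fun v => ?_
  · obtain ⟨b, rfl⟩ := e.surjective v
    have hb : (mapSubrep f B).toRepresentation g (e b) = e (B.toRepresentation g b) :=
      Subtype.ext (f.isIntertwining _ _ g b).symm
    change e.symm ((mapSubrep f B).toRepresentation g (e b)) =
      B.toRepresentation g (e.symm (e b))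
    rw [hb, e.symm_apply_apply, e.symm_apply_apply]
  · obtain ⟨b, rfl⟩ := e.surjective v
    change (e.symm (e b) : U) ∈ A ↔ f b ∈ mapSubrep f A
    rw [e.symm_apply_apply]
    exact (hf.mem_set_image (s := (A : Set U))).symm

/-- The representation `ρ` has a finite filtration whose subquotients are finite-dimensional
representations induced from subgroups satisfying `S`. -/
def IsInducedFiltered (S : Subgroup G → Prop) (ρ : Representation k G V) : Prop :=
  Relation.ReflTransGen (IsInducedStep S ρ) ⊥ ⊤

namespace IsInducedFiltered

lemma of_subsingleton [Subsingleton V] (ρ : Representation k G V) : IsInducedFiltered S ρ := by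
  have h : (⊥ : Subrepresentation ρ) = ⊤ :=
    Subrepresentation.toSubmodule_injective (Subsingleton.elim _ _)
  rw [IsInducedFiltered, h]

lemma of_isInducedFrom [FiniteDimensional k V] {E : Subgroup G} (hE : S E)
    (hρ : IsInducedFrom ρ E) : IsInducedFiltered S ρ :=
  .single ⟨bot_le, E, hE, Rep.of ρ, ‹_›, hρ,
    ⟨Submodule.subtype _, fun _ => rfl⟩, fun v => ⟨⟨v, trivial⟩, rfl⟩, fun _ => Iff.rfl⟩

lemma ext (hτ : IsInducedFiltered S τ) (hσ : IsInducedFiltered S σ) (f : IntertwiningMap τ ρ)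
    (g : IntertwiningMap ρ σ) (hf : Function.Injective f) (hfg : Function.Exact f g)
    (hg : Function.Surjective g) : IsInducedFiltered S ρ := by
  have hτρ : Relation.ReflTransGen (IsInducedStep S ρ) (mapSubrep f ⊥) (mapSubrep f ⊤) :=
    hτ.lift _ fun _ _ h => h.map hf
  have hσρ : Relation.ReflTransGen (IsInducedStep S ρ) (comapSubrep g ⊥) (comapSubrep g ⊤) :=
    hσ.lift _ fun _ _ h => h.comap hg
  have hbot : mapSubrep f ⊥ = ⊥ := Subrepresentation.toSubmodule_injective (Submodule.map_bot _)
  have hmid : mapSubrep f ⊤ = comapSubrep g ⊥ :=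
    Subrepresentation.toSubmodule_injective
      ((Submodule.map_top _).trans (LinearMap.exact_iff.1 hfg).symm)
  rw [hbot, hmid] at hτρ
  exact hτρ.trans hσρ

lemma of_bijective (hτ : IsInducedFiltered S τ) (f : IntertwiningMap τ ρ)
    (hf : Function.Bijective f) : IsInducedFiltered S ρ := by
  refine hτ.ext (of_subsingleton (1 : Representation k G PUnit)) f 0 hf.1
    (fun v => ⟨fun _ => hf.2 v, fun _ => rfl⟩) fun _ => ⟨0, rfl⟩

lemma ext_prod {A C : Type} [AddCommGroup A] [Module k A] [AddCommGroup C] [Module k C]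
    {α : Representation k G A} {γ : Representation k G C}
    (hτ : IsInducedFiltered S (τ.prod α)) (hσ : IsInducedFiltered S (σ.prod γ))
    (f : IntertwiningMap τ ρ) (g : IntertwiningMap ρ σ) (hf : Function.Injective f)
    (hfg : Function.Exact f g) (hg : Function.Surjective g) :
    IsInducedFiltered S (ρ.prod (α.prod γ)) := by
  refine hτ.ext hσ
    ((f.comp (.fst k τ α)).prod ((IntertwiningMap.inl k α γ).comp (.snd k τ α)))
    ((g.comp (.fst k ρ _)).prod ((IntertwiningMap.snd k α γ).comp (.snd k ρ _)))
    (hf.prodMap LinearMap.inl_injective) ?_ (hg.prodMap Prod.snd_surjective)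
  rintro ⟨v, a, c⟩
  constructor
  · intro h
    obtain ⟨u, rfl⟩ := (hfg v).1 (congrArg Prod.fst h)
    obtain rfl : c = 0 := congrArg Prod.snd h
    exact ⟨(u, a), rfl⟩
  · rintro ⟨⟨u, a⟩, h⟩
    rw [← h]
    exact Prod.ext (hfg.apply_apply_eq_zero u) rfl

lemma retract_prod {A : Type} [AddCommGroup A] [Module k A] {α : Representation k G A}
    (hτ : IsInducedFiltered S (τ.prod α)) (i : IntertwiningMap ρ τ) (r : IntertwiningMap τ ρ)
    (hri : ∀ v, r (i v) = v) : IsInducedFiltered S (ρ.prod (r.ker.toRepresentation.prod α)) := by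
  let toKer : IntertwiningMap τ r.ker.toRepresentation :=
    { toLinearMap := (LinearMap.id - i.toLinearMap ∘ₗ r.toLinearMap).codRestrict _ fun u => by
        simp [hri]
      isIntertwining' := fun g => LinearMap.ext fun u => Subtype.ext <| by
        change τ g u - i (r (τ g u)) = τ g (u - i (r u))
        rw [r.isIntertwining, i.isIntertwining, map_sub] }
  have htoKer u : (toKer u : U) = u - i (r u) := rfl
  refine hτ.of_bijective
    ((r.comp (.fst k τ α)).prod ((toKer.comp (.fst k τ α)).prod (.snd k τ α)))
    ⟨?_, ?_⟩
  · rintro ⟨u, a⟩ ⟨u', a'⟩ h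
    have hr : r u = r u' := congrArg Prod.fst h
    have hker : u - i (r u) = u' - i (r u') := congrArg (fun x => (x.2.1 : U)) h
    rw [hr, sub_left_inj] at hker
    exact Prod.ext hker (congrArg (fun x => x.2.2) h)
  · rintro ⟨v, ⟨u, hu⟩, a⟩
    have hr : r (i v + u) = v := by rw [map_add, hri, show r u = 0 from hu, add_zero]
    refine ⟨(i v + u, a), Prod.ext hr (Prod.ext (Subtype.ext ?_) rfl)⟩
    change (toKer (i v + u) : U) = u
    rw [htoKer, hr, add_sub_cancel_left]

end IsInducedFiltered

end Filtration

theorem BuiltFrom.exists_isInducedFiltered_prod [Finite G] {S : Subgroup G → Prop} {V : Type}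
    [AddCommGroup V] [Module k V] {ρ : Representation k G V} (h : BuiltFrom S ρ) :
    ∃ V' : Rep k G, FiniteDimensional k V'.V ∧ IsInducedFiltered S (ρ.prod V'.ρ) := by
  induction h with
  | zero ρ =>
    exact ⟨Rep.of (1 : Representation k G PUnit), inferInstanceAs (FiniteDimensional k PUnit),
      .of_subsingleton _⟩
  | coset E hE ρ =>
    exact ⟨Rep.of (1 : Representation k G PUnit), inferInstanceAs (FiniteDimensional k PUnit),
      (IsInducedFiltered.of_isInducedFrom hE (isInducedFrom_funRep ρ E)).of_bijective
        (.inl k _ _) ⟨LinearMap.inl_injective, fun x => ⟨x.1, rfl⟩⟩⟩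
  | ext f g hf hfg hg _ _ ihτ ihσ =>
    obtain ⟨A, hA, hτ⟩ := ihτ
    obtain ⟨C, hC, hσ⟩ := ihσ
    exact ⟨Rep.of (A.ρ.prod C.ρ), inferInstanceAs (FiniteDimensional k (A.V × C.V)),
      hτ.ext_prod hσ f g hf hfg hg⟩
  | retract i r hri h ih =>
    obtain ⟨A, hA, hτ⟩ := ih
    have := h.finiteDimensional
    exact ⟨Rep.of (r.ker.toRepresentation.prod A.ρ),
      inferInstanceAs (FiniteDimensional k (r.ker.toSubmodule × A.V)), hτ.retract_prod i r hri⟩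

lemma exists_relSeries_of_reflTransGen {α : Type*} {r : α → α → Prop} {a b : α}
    (h : Relation.ReflTransGen r a b) :
    ∃ s : RelSeries {(x, y) | r x y}, s.head = a ∧ s.last = b := by
  induction h with
  | refl => exact ⟨.singleton _ a, rfl, rfl⟩
  | tail _ hbc ih =>
    obtain ⟨s, rfl, rfl⟩ := ih
    exact ⟨s.snoc _ hbc, s.head_snoc _ hbc, s.last_snoc _ hbc⟩

theorem filtration_by_modules_induced_from_elementary_abelians_general [Finite G] (p : ℕ)
    [Fact p.Prime] [CharP k p] {U : Type} [AddCommGroup U] [Module k U] [FiniteDimensional k U]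
    (τ : Representation k G U) :
    ∃ (Vr : Rep.{0} k G) (_ : FiniteDimensional k Vr.V) (t : ℕ)
      (M : Fin (t + 1) → Submodule k (U × Vr.V))
      (hinv : ∀ (i : Fin (t + 1)) (g : G) (x : U × Vr.V), x ∈ M i → τ.prod Vr.ρ g x ∈ M i),
      M 0 = ⊥ ∧ M (Fin.last t) = ⊤
        ∧ (∀ i : Fin t, M i.castSucc ≤ M i.succ)
        ∧ ∀ i : Fin t, ∃ E : Subgroup G, IsElementaryAbelian p E ∧
            ∃ (Qr : Rep k G) (_ : FiniteDimensional k Qr.V),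
              IsInducedFrom Qr.ρ E ∧
              ∃ φ : (M i.succ) →ₗ[k] Qr.V,
                Function.Surjective φ
                ∧ LinearMap.ker φ = (M i.castSucc).comap (M i.succ).subtype
                ∧ ∀ (g : G) (x : M i.succ),
                    φ ⟨τ.prod Vr.ρ g x.1, hinv i.succ g x.1 x.2⟩ = Qr.ρ g (φ x) := by
  obtain ⟨V, hV, hfiltered⟩ := (BuiltFrom.isElementaryAbelian p τ).exists_isInducedFiltered_prod
  obtain ⟨s, hhead, hlast⟩ := exists_relSeries_of_reflTransGen hfiltered
  refine ⟨V, hV, s.length, fun i => (s i).toSubmodule,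
    fun i g _ hx => (s i).apply_mem_toSubmodule g hx, congrArg _ hhead, congrArg _ hlast,
    fun i => (s.step i).1, fun i => ?_⟩
  obtain ⟨-, E, hE, Q, hQ, hQE, φ, hφ, hker⟩ := s.step i
  exact ⟨E, hE, Q, hQ, hQE, φ.toLinearMap, hφ, Submodule.ext hker, φ.isIntertwining _ _⟩

/-- the filtration theorem of Carlson:
Let `G` be a finite group and `k` a field of characteristic `p > 0` dividing `|G|`.
There exist a finitely generated `kG`-module `V` and a filtration
`0 = M_0 ⊆ M_1 ⊆ ⋯ ⊆ M_t = k ⊕ V` of `kG`-modules such that for every `i = 1,…,t` there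
is an elementary abelian `p`-subgroup `E_i ⊆ G` and a finitely generated `kE_i`-module
`W_i` with `M_i/M_{i−1} ≅ (W_i)↑_{E_i}^G`, the `kG`-module induced from `W_i`.

The subquotient condition `M_i/M_{i-1} ≅ W↑` is expressed as: there is a `G`-equivariant
`k`-linear surjection `φ : M_i → Q` with kernel `M_{i-1}`, where the `G`-representation
`Q` is induced from the subgroup `E_i` (in the sense of the imprimitivity criterion
`IsInducedFrom`, which characterises the induced modules `W↑_E^G` with `W` the
distinguished `E`-stable subspace). -/
theorem filtration_by_modules_induced_from_elementary_abelians
    (k : Type) [Field k] (G : Type) [Group G] [Fintype G]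
    (p : ℕ) [Fact p.Prime] [CharP k p] (hdvd : p ∣ Fintype.card G) :
    ∃ (Vr : Rep k G) (_ : FiniteDimensional k Vr.V) (t : ℕ)
      (M : Fin (t + 1) → Submodule k (k × Vr.V))
      (hinv : ∀ (i : Fin (t + 1)) (g : G) (x : k × Vr.V),
        x ∈ M i → trivProdRep Vr.ρ g x ∈ M i),
      M 0 = ⊥ ∧ M (Fin.last t) = ⊤
        ∧ (∀ i : Fin t, M i.castSucc ≤ M i.succ)
        ∧ ∀ i : Fin t, ∃ E : Subgroup G, IsElementaryAbelian p E ∧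
            ∃ (Qr : Rep k G) (_ : FiniteDimensional k Qr.V),
              IsInducedFrom Qr.ρ E ∧
              ∃ φ : (M i.succ) →ₗ[k] Qr.V,
                Function.Surjective φ
                ∧ LinearMap.ker φ = (M i.castSucc).comap (M i.succ).subtype
                ∧ ∀ (g : G) (x : M i.succ),
                    φ ⟨trivProdRep Vr.ρ g x.1, hinv i.succ g x.1 x.2⟩ = Qr.ρ g (φ x) := by
  exact filtration_by_modules_induced_from_elementary_abelians_general p (1 : Representation k G k)
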